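/- arXiv:0802.3434 — 2 statements merged into one kernel-verified Lean document; each statement's English description precedes it below -/
import Mathlib

section
/- Let (a_n)_{n≥0} be a sequence of real numbers with 1 = a_0 ≥ a_1 ≥ a_2 ≥ … and a_i − 2a_{i+1} + a_{i+2} ≥ 0 for all i ≥ 0. Then there exists a shift-invariant Borel probability measure μ on X = {0,1}^ℕ such that, writing p_w = μ([w]): (i) for every n ≥ 0, p_{0 0^n 0} = a_{n+2}, p_{0 0^n 1} = p_{1 0^n 0} = a_{n+1} − a_{n+2}, p_{1 0^n 1} = a_n − 2a_{n+1} + a_{n+2}; (ii) for every finite word w that is not a block of zeros and all ε, ε' ∈ {0,1}, p_{ε w ε'} = p_{ε w} p_{w ε'} / p_w. These relations determine μ uniquely, and μ is the unique measure of maximal measure-theoretic entropy among all shift-invariant Borel probability measures ν with ν([0^n]) = a_n for all n ≥ 1. -/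
open MeasureTheory Filter Topology Set
open scoped ENNReal NNReal

/-!  General definitions: Bowen topological entropy (via covers by Bowen balls),
measure-theoretic (Kolmogorov–Sinai) entropy, generic points, saturated systems,
and the specification property. -/

variable {X : Type*}

/-- The Bowen ball of center `x`, order `n`, radius `ε` (for the metric
`d_n(x,y) = max_{0 ≤ j < n} d(T^j x, T^j y)`). -/
def bowenBall [PseudoMetricSpace X] (T : X → X) (x : X) (n : ℕ) (ε : ℝ) : Set X :=
  {y | ∀ j < n, dist (T^[j] x) (T^[j] y) < ε}

/-- `H_n^s(Z,ε)`: infimum of `Σ_i exp(-s n_i)` over countable covers of `Z` by Bowen balls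
`B_{n_i}(x_i,ε)` with all `n_i ≥ n`. -/
noncomputable def bowenH [PseudoMetricSpace X] (T : X → X) (Z : Set X) (s ε : ℝ) (n : ℕ) :
    ℝ≥0∞ :=
  ⨅ (C : Set (X × ℕ)) (_ : C.Countable) (_ : ∀ p ∈ C, n ≤ p.2)
    (_ : Z ⊆ ⋃ p ∈ C, bowenBall T p.1 p.2 ε),
    ∑' p : C, ENNReal.ofReal (Real.exp (-s * ((p : X × ℕ).2 : ℝ)))

/-- `h_top(Z,ε)`: the critical exponent of `s ↦ H^s(Z,ε) = sup_n H_n^s(Z,ε)`. -/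
noncomputable def bowenEntropyRes [PseudoMetricSpace X] (T : X → X) (Z : Set X) (ε : ℝ) :
    ℝ≥0∞ :=
  sInf ((fun s : ℝ≥0 => (s : ℝ≥0∞)) '' {s : ℝ≥0 | (⨆ n, bowenH T Z (s : ℝ) ε n) = 0})

/-- Bowen topological entropy of a subset `Z`: `h_top(Z) = lim_{ε → 0} h_top(Z,ε)`
(the limit being a supremum by monotonicity in `ε`). -/
noncomputable def bowenEntropy [PseudoMetricSpace X] (T : X → X) (Z : Set X) : ℝ≥0∞ :=
  ⨆ (ε : ℝ) (_ : 0 < ε), bowenEntropyRes T Z ε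

/-- Entropy of the partition `P ∨ T⁻¹P ∨ ⋯ ∨ T⁻⁽ⁿ⁻¹⁾P`, where a countable partition is
encoded as a function `P : X → ℕ`: it is the Shannon entropy of the map
`x ↦ (P x, P (T x), …, P (Tⁿ⁻¹ x))`. -/
noncomputable def partInfo [MeasurableSpace X] (T : X → X) (μ : Measure X) (P : X → ℕ)
    (n : ℕ) : ℝ≥0∞ :=
  ∑' l : List ℕ, ENNReal.ofReal (Real.negMulLog
    ((μ ((fun x => (List.range n).map fun j => P (T^[j] x)) ⁻¹' {l})).toReal))

/-- Measure-theoretic (Kolmogorov–Sinai) entropy `h_μ(T)`: supremum over finite measurable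
partitions `P` of `lim_n (1/n) H_μ(P ∨ T⁻¹P ∨ ⋯ ∨ T⁻⁽ⁿ⁻¹⁾P)` (the limit exists by
subadditivity, so it may be written as a `liminf`). -/
noncomputable def ksEntropy [MeasurableSpace X] (T : X → X) (μ : Measure X) : ℝ≥0∞ :=
  ⨆ (P : X → ℕ) (_ : Measurable P) (_ : (Set.range P).Finite),
    Filter.atTop.liminf fun n : ℕ => partInfo T μ P n / (n : ℝ≥0∞)

/-- `x` is a generic point for `μ` : the empirical measures `(1/n) Σ_{j<n} δ_{T^j x}`
converge to `μ` in the weak-star topology, i.e. Birkhoff averages of every continuous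
function converge to its integral. -/
def IsGeneric [TopologicalSpace X] [MeasurableSpace X] (T : X → X) (μ : Measure X)
    (x : X) : Prop :=
  ∀ f : C(X, ℝ), Tendsto (fun n : ℕ => (∑ j ∈ Finset.range n, f (T^[j] x)) / (n : ℝ))
    atTop (𝓝 (∫ y, f y ∂μ))

/-- `μ ∈ V(x)` : `μ` is a weak-star limit point of the empirical measures of `x`. -/
def IsLimitMeasure [TopologicalSpace X] [MeasurableSpace X] (T : X → X) (x : X)
    (μ : Measure X) : Prop :=
  ∃ φ : ℕ → ℕ, StrictMono φ ∧ ∀ f : C(X, ℝ),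
    Tendsto (fun m : ℕ => (∑ j ∈ Finset.range (φ m), f (T^[j] x)) / (φ m : ℝ))
      atTop (𝓝 (∫ y, f y ∂μ))

/-- A system is saturated if `h_top(G_μ) = h_μ` for every invariant Borel probability
measure `μ`. -/
def Saturated [PseudoMetricSpace X] [MeasurableSpace X] (T : X → X) : Prop :=
  ∀ μ : Measure X, IsProbabilityMeasure μ → MeasurePreserving T μ μ →
    bowenEntropy T {x | IsGeneric T μ x} = ksEntropy T μ

/-- The specification property. -/
def SpecificationProperty [PseudoMetricSpace X] (T : X → X) : Prop :=
  ∀ ε : ℝ, 0 < ε → ∃ m : ℕ, 1 ≤ m ∧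
    ∀ k : ℕ, 2 ≤ k → ∀ x : ℕ → X, ∀ a b : ℕ → ℕ,
      (∀ i < k, a i ≤ b i) →
      (∀ i, i + 1 < k → b i + m ≤ a (i + 1)) →
      ∃ y : X, ∀ i < k, ∀ n ≤ b i - a i,
        dist (T^[a i + n] y) (T^[n] (x i)) < ε

/-! Symbolic dynamics on `X = {0,1}^ℕ`. -/

/-- The metric `d(x,y) = (1/2)^(first difference)` on the symbolic space `{0,1}^ℕ`. -/
noncomputable instance : MetricSpace (ℕ → Bool) := PiNat.metricSpace

/-- The shift map on `{0,1}^ℕ`. -/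
def shift : (ℕ → Bool) → ℕ → Bool := fun x n => x (n + 1)

/-- The cylinder `[w]` of all sequences beginning with the finite word `w`. -/
def cyl (w : List Bool) : Set (ℕ → Bool) :=
  {x | ∀ i : Fin w.length, x i.1 = w.get i}

/-- `R(x,[w]) = r` : the frequency of visits of the orbit of `x` to the cylinder `[w]`
exists and equals `r`. -/
def hasFreq (w : List Bool) (x : ℕ → Bool) (r : ℝ) : Prop :=
  Filter.Tendsto (fun n : ℕ =>
      (∑ j ∈ Finset.range n, (cyl w).indicator (fun _ => (1 : ℝ)) (shift^[j] x)) / (n : ℝ))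
    Filter.atTop (nhds r)

/-- The values of `μ` on the cylinders `[ε 0^n ε']` prescribed by Lemma 5.4. -/
def cylRel (a : ℕ → ℝ) (μ : Measure (ℕ → Bool)) : Prop :=
  ∀ n : ℕ,
    (μ (cyl (false :: (List.replicate n false ++ [false])))).toReal = a (n + 2) ∧
    (μ (cyl (false :: (List.replicate n false ++ [true])))).toReal
      = a (n + 1) - a (n + 2) ∧
    (μ (cyl (true :: (List.replicate n false ++ [false])))).toReal
      = a (n + 1) - a (n + 2) ∧
    (μ (cyl (true :: (List.replicate n false ++ [true])))).toReal
      = a n - 2 * a (n + 1) + a (n + 2)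

/-- The recursion relations `p_{ε w ε'} = p_{ε w} p_{w ε'} / p_w` (in multiplicative form)
for every word `w` that is not a block of zeros. -/
def markovRel (μ : Measure (ℕ → Bool)) : Prop :=
  ∀ w : List Bool, w ≠ List.replicate w.length false → ∀ e e' : Bool,
    (μ (cyl (e :: (w ++ [e'])))).toReal * (μ (cyl w)).toReal =
      (μ (cyl (e :: w))).toReal * (μ (cyl (w ++ [e']))).toReal

/-! ### Submodularity of the Shannon entropy -/

section Shannon

open Real Finset

theorem relEntropy_term {x r c t : ℝ} (hx : 0 ≤ x) (hxr : x ≤ r) (hxc : x ≤ c) (ht : 0 < t) :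
    0 ≤ x * log x - x * (log r + log c - log t) + r * c / t - x ∧
      (x * log x - x * (log r + log c - log t) + r * c / t - x = 0 → x * t = r * c) := by
  rcases hx.eq_or_lt with rfl | hx0
  · have h : 0 ≤ r * c / t := by positivity
    refine ⟨by simpa using h, fun h0 => ?_⟩
    have h1 : r * c / t = 0 := by simpa using h0
    field_simp at h1
    simp [h1]
  · have hr : 0 < r := hx0.trans_le hxr
    have hc : 0 < c := hx0.trans_le hxc
    have hy : 0 < r * c / t := by positivity
    have hlog : log (x / (r * c / t)) = log x - (log r + log c - log t) := by
      rw [log_div hx0.ne' hy.ne', log_div (by positivity) ht.ne', log_mul hr.ne' hc.ne']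
    have key : x * log x - x * (log r + log c - log t) + r * c / t - x
        = r * c / t * InformationTheory.klFun (x / (r * c / t)) := by
      rw [InformationTheory.klFun, hlog]
      field_simp
    have hq : 0 ≤ x / (r * c / t) := by positivity
    rw [key]
    refine ⟨mul_nonneg hy.le (InformationTheory.klFun_nonneg hq), fun h0 => ?_⟩
    have h1 := (InformationTheory.klFun_eq_zero_iff hq).1
      ((mul_eq_zero.1 h0).resolve_left hy.ne')
    rw [div_eq_one_iff_eq hy.ne', eq_div_iff ht.ne'] at h1
    exact h1

theorem negMulLog_submodular {α β : Type*} [Fintype α] [Fintype β] (x : α → β → ℝ)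
    (hx : ∀ a b, 0 ≤ x a b) :
    (∑ a, ∑ b, negMulLog (x a b)) + negMulLog (∑ a, ∑ b, x a b) ≤
        (∑ a, negMulLog (∑ b, x a b)) + ∑ b, negMulLog (∑ a, x a b) ∧
      ((∑ a, ∑ b, negMulLog (x a b)) + negMulLog (∑ a, ∑ b, x a b) =
        (∑ a, negMulLog (∑ b, x a b)) + ∑ b, negMulLog (∑ a, x a b) →
        ∀ a b, x a b * (∑ a, ∑ b, x a b) = (∑ b, x a b) * ∑ a, x a b) := by
  set t := ∑ a, ∑ b, x a b with ht_def
  have ht0 : 0 ≤ t := sum_nonneg fun a _ => sum_nonneg fun b _ => hx a b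
  have hr : ∀ a b, x a b ≤ ∑ b, x a b := fun a b =>
    single_le_sum (f := fun b => x a b) (fun b _ => hx a b) (mem_univ b)
  have hc : ∀ a b, x a b ≤ ∑ a, x a b := fun a b =>
    single_le_sum (f := fun a => x a b) (fun a _ => hx a b) (mem_univ a)
  rcases ht0.eq_or_lt with h0 | ht
  · have hz : ∀ a b, x a b = 0 := by
      intro a b
      have h1 := (sum_eq_zero_iff_of_nonneg
        (fun a _ => sum_nonneg fun b _ => hx a b)).1 (ht_def.symm.trans h0.symm) a (mem_univ a)
      exact (sum_eq_zero_iff_of_nonneg (fun b _ => hx a b)).1 h1 b (mem_univ b)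
    simp [hz, ← h0]
  · have hk := fun a b => relEntropy_term (hx a b) (hr a b) (hc a b) ht
    have hcomm : ∑ b, ∑ a, x a b = t := sum_comm
    have hsum : ∑ a, ∑ b, (x a b * log (x a b)
          - x a b * (log (∑ b, x a b) + log (∑ a, x a b) - log t)
          + (∑ b, x a b) * (∑ a, x a b) / t - x a b)
        = (∑ a, negMulLog (∑ b, x a b)) + (∑ b, negMulLog (∑ a, x a b))
          - ((∑ a, ∑ b, negMulLog (x a b)) + negMulLog t) := by
      have e1 : ∑ a, ∑ b, (∑ b, x a b) * (∑ a, x a b) / t = t := by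
        simp_rw [mul_div_assoc, ← mul_sum, ← sum_div, hcomm, ← sum_mul]
        rw [← ht_def]
        field_simp
      have e2 : ∑ a, ∑ b, x a b * log (∑ b, x a b) = - ∑ a, negMulLog (∑ b, x a b) := by
        simp_rw [← sum_mul, negMulLog]
        simp
      have e3 : ∑ a, ∑ b, x a b * log (∑ a, x a b) = - ∑ b, negMulLog (∑ a, x a b) := by
        rw [sum_comm]
        simp_rw [← sum_mul, negMulLog]
        simp
      have e4 : ∑ a, ∑ b, x a b * log t = - negMulLog t := by
        simp_rw [← sum_mul]
        simp [negMulLog, ← ht_def]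
      have e5 : ∑ a, ∑ b, x a b * log (x a b) = - ∑ a, ∑ b, negMulLog (x a b) := by
        simp [negMulLog]
      simp_rw [sum_sub_distrib, sum_add_distrib, sum_sub_distrib, mul_sub, mul_add,
        sum_sub_distrib, sum_add_distrib]
      rw [e1, e2, e3, e4, e5, ← ht_def]
      ring
    have hnn := sum_nonneg fun a (_ : a ∈ (univ : Finset α)) =>
      sum_nonneg fun b (_ : b ∈ (univ : Finset β)) => (hk a b).1
    refine ⟨by linarith, fun heq a b => (hk a b).2 ?_⟩
    have h0 := hsum.trans (by linarith : _ = (0 : ℝ))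
    have h1 := (sum_eq_zero_iff_of_nonneg
      (fun a _ => sum_nonneg fun b _ => (hk a b).1)).1 h0 a (mem_univ a)
    exact (sum_eq_zero_iff_of_nonneg (fun b _ => (hk a b).1)).1 h1 b (mem_univ b)

theorem negMulLog_sum_le {ι : Type*} (s : Finset ι) (x : ι → ℝ) (hx : ∀ i ∈ s, 0 ≤ x i) :
    negMulLog (∑ i ∈ s, x i) ≤ ∑ i ∈ s, negMulLog (x i) := by
  rw [negMulLog, ← neg_mul_eq_neg_mul, sum_mul, ← sum_neg_distrib]
  refine sum_le_sum fun i hi => ?_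
  rw [negMulLog, neg_mul, neg_le_neg_iff]
  rcases (hx i hi).eq_or_lt with h | h
  · simp [← h]
  · exact mul_le_mul_of_nonneg_left (log_le_log h (single_le_sum hx hi)) h.le

end Shannon

/-! ### Stationary weights on words -/

section Words

open Real Finset

/-- Nonnegative weights on words satisfying the consistency relations of the cylinder
probabilities of a shift-invariant probability measure. -/
structure IsStationaryWeight (p : List Bool → ℝ) : Prop where
  nonneg : ∀ w, 0 ≤ p w
  nil : p [] = 1
  sum_cons : ∀ w, ∑ e, p (e :: w) = p w
  sum_append : ∀ w, ∑ e, p (w ++ [e]) = p w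

/-- The Shannon entropy of the weights of the words of length `n`. -/
noncomputable def wordEntropy (p : List Bool → ℝ) (n : ℕ) : ℝ :=
  ∑ v : Fin n → Bool, negMulLog (p (List.ofFn v))

/-- The increments of the word entropy. -/
noncomputable def entropyStep (p : List Bool → ℝ) (n : ℕ) : ℝ :=
  wordEntropy p (n + 1) - wordEntropy p n

/-- The conditional mutual information of the two letters around the word `w`. -/
noncomputable def wordDefect (p : List Bool → ℝ) (w : List Bool) : ℝ :=
  (∑ e, negMulLog (p (e :: w))) + (∑ e, negMulLog (p (w ++ [e])))
    - ((∑ e, ∑ e', negMulLog (p (e :: (w ++ [e'])))) + negMulLog (p w))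

theorem sum_ofFn_succ (n : ℕ) (F : List Bool → ℝ) :
    ∑ v : Fin (n + 1) → Bool, F (List.ofFn v)
      = ∑ v : Fin n → Bool, ∑ e, F (e :: List.ofFn v) := by
  rw [sum_comm, ← Fintype.sum_prod_type']
  refine (Fintype.sum_equiv (Fin.consEquiv fun _ => Bool) _ _ fun x => ?_).symm
  simp [Fin.consEquiv]

theorem sum_ofFn_succ' (n : ℕ) (F : List Bool → ℝ) :
    ∑ v : Fin (n + 1) → Bool, F (List.ofFn v)
      = ∑ v : Fin n → Bool, ∑ e, F (List.ofFn v ++ [e]) := by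
  rw [sum_comm, ← Fintype.sum_prod_type']
  refine (Fintype.sum_equiv (Fin.snocEquiv fun _ => Bool) _ _ fun x => ?_).symm
  simp only [Fin.snocEquiv, Equiv.coe_fn_mk]
  rw [List.ofFn_succ']
  simp

theorem entropyStep_sub_succ (p : List Bool → ℝ) (n : ℕ) :
    entropyStep p n - entropyStep p (n + 1)
      = ∑ v : Fin n → Bool, wordDefect p (List.ofFn v) := by
  have h1 := sum_ofFn_succ n fun w => negMulLog (p w)
  have h2 := sum_ofFn_succ' n fun w => negMulLog (p w)
  have h3 : ∑ v : Fin (n + 2) → Bool, negMulLog (p (List.ofFn v))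
      = ∑ v : Fin n → Bool, ∑ e, ∑ e', negMulLog (p (e :: (List.ofFn v ++ [e']))) := by
    rw [sum_ofFn_succ (n + 1) fun w => negMulLog (p w),
      sum_ofFn_succ' n fun w => ∑ e, negMulLog (p (e :: w))]
    exact sum_congr rfl fun v _ => sum_comm
  simp only [entropyStep, wordEntropy, wordDefect, sum_sub_distrib, sum_add_distrib]
  rw [h3, ← h2, ← h1]
  ring

namespace IsStationaryWeight

variable {p q : List Bool → ℝ}

theorem wordDefect_nonneg (hp : IsStationaryWeight p) (w : List Bool) :
    0 ≤ wordDefect p w ∧ (wordDefect p w = 0 → ∀ e e',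
      p (e :: (w ++ [e'])) * p w = p (e :: w) * p (w ++ [e'])) := by
  have h := negMulLog_submodular (fun e e' => p (e :: (w ++ [e']))) fun _ _ => hp.nonneg _
  have hr : ∀ e, ∑ e', p (e :: (w ++ [e'])) = p (e :: w) := fun e => hp.sum_append (e :: w)
  have hc : ∀ e', ∑ e, p (e :: (w ++ [e'])) = p (w ++ [e']) := fun e' => hp.sum_cons _
  simp only [hr, hc, hp.sum_cons] at h
  exact ⟨sub_nonneg.2 h.1, fun h0 => h.2 (sub_eq_zero.1 h0).symm⟩

theorem wordDefect_eq_zero (hp : IsStationaryWeight p) {w : List Bool}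
    (h : ∀ e e', p (e :: (w ++ [e'])) * p w = p (e :: w) * p (w ++ [e'])) :
    wordDefect p w = 0 := by
  have hr : ∀ e, ∑ e', p (e :: (w ++ [e'])) = p (e :: w) := fun e => hp.sum_append (e :: w)
  have hc : ∀ e', ∑ e, p (e :: (w ++ [e'])) = p (w ++ [e']) := fun e' => hp.sum_cons _
  have hrt := hp.sum_cons w
  have hct := hp.sum_append w
  have hle : ∀ e, p (e :: w) ≤ p w := fun e => by
    rw [← hrt]; exact single_le_sum (fun e _ => hp.nonneg (e :: w)) (mem_univ e)
  have hle' : ∀ e, p (w ++ [e]) ≤ p w := fun e => by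
    rw [← hct]; exact single_le_sum (fun e _ => hp.nonneg (w ++ [e])) (mem_univ e)
  rcases (hp.nonneg w).eq_or_lt with h0 | hpos
  · have hz : ∀ e, p (e :: w) = 0 := fun e => le_antisymm (h0 ▸ hle e) (hp.nonneg _)
    have hz' : ∀ e, p (w ++ [e]) = 0 := fun e => le_antisymm (h0 ▸ hle' e) (hp.nonneg _)
    have hzz : ∀ e e', p (e :: (w ++ [e'])) = 0 := fun e e' =>
      le_antisymm (by
        rw [← hz e, ← hr e]
        exact single_le_sum (f := fun e' => p (e :: (w ++ [e'])))
          (fun _ _ => hp.nonneg _) (mem_univ e')) (hp.nonneg _)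
    simp [wordDefect, hz, hz', hzz, ← h0]
  · have hx : ∀ e e', p (e :: (w ++ [e'])) = p (e :: w) / p w * p (w ++ [e']) := by
      intro e e'
      rw [div_mul_eq_mul_div, eq_div_iff hpos.ne', h]
    have hη : ∀ e, negMulLog (p (e :: w) / p w) * p w
        = negMulLog (p (e :: w)) + p (e :: w) * log (p w) := by
      intro e
      rcases (hp.nonneg (e :: w)).eq_or_lt with h1 | h1
      · simp [← h1]
      · rw [negMulLog, negMulLog, log_div h1.ne' hpos.ne']
        field_simp
        ring
    have hsum1 : ∑ e, p (e :: w) / p w = 1 := by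
      rw [← sum_div, hrt, div_self hpos.ne']
    have : ∑ e, ∑ e', negMulLog (p (e :: (w ++ [e'])))
        = (∑ e, negMulLog (p (e :: w))) + p w * log (p w)
          + ∑ e', negMulLog (p (w ++ [e'])) := by
      simp_rw [hx, negMulLog_mul, sum_add_distrib, ← mul_sum, ← sum_mul, hsum1, hct, one_mul]
      simp_rw [mul_comm (p w), hη, sum_add_distrib, ← sum_mul, hrt]
      ring
    rw [wordDefect, this, negMulLog]
    ring

theorem antitone_entropyStep (hp : IsStationaryWeight p) : Antitone (entropyStep p) := by
  refine antitone_nat_of_succ_le fun n => sub_nonneg.1 ?_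
  rw [entropyStep_sub_succ]
  exact sum_nonneg fun v _ => (hp.wordDefect_nonneg _).1

theorem entropyStep_nonneg (hp : IsStationaryWeight p) (n : ℕ) : 0 ≤ entropyStep p n := by
  rw [entropyStep, wordEntropy, wordEntropy, sum_ofFn_succ' n fun w => negMulLog (p w),
    ← sum_sub_distrib]
  refine sum_nonneg fun v _ => sub_nonneg.2 ?_
  rw [← hp.sum_append (List.ofFn v)]
  exact negMulLog_sum_le _ _ fun _ _ => hp.nonneg _

theorem bddBelow_entropyStep (hp : IsStationaryWeight p) :
    BddBelow (Set.range (entropyStep p)) :=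
  ⟨0, by rintro _ ⟨n, rfl⟩; exact hp.entropyStep_nonneg n⟩

theorem tendsto_entropyStep (hp : IsStationaryWeight p) :
    Tendsto (entropyStep p) atTop (𝓝 (⨅ n, entropyStep p n)) :=
  tendsto_atTop_ciInf hp.antitone_entropyStep hp.bddBelow_entropyStep

theorem tendsto_wordEntropy_div (hp : IsStationaryWeight p) :
    Tendsto (fun n : ℕ => wordEntropy p n / n) atTop (𝓝 (⨅ n, entropyStep p n)) := by
  refine hp.tendsto_entropyStep.cesaro.congr fun n => ?_
  have h0 : wordEntropy p 0 = 0 := by simp [wordEntropy, hp.nil]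
  have : ∑ i ∈ range n, entropyStep p i = wordEntropy p n := by
    simp only [entropyStep]
    rw [sum_range_sub, h0, sub_zero]
  rw [this, div_eq_inv_mul]

/-- Weights satisfying the Markov relation around all words which are not blocks of zeros
maximize the entropy among the weights with the same values at the blocks `ε 0ⁿ ε'`. -/
theorem iInf_entropyStep_le (hp : IsStationaryWeight p) (hq : IsStationaryWeight q)
    (hzero : ∀ n, p (List.replicate n false) = q (List.replicate n false))
    (hcyl : ∀ n e e', p (e :: (List.replicate n false ++ [e']))
      = q (e :: (List.replicate n false ++ [e'])))
    (hmarkov : ∀ w : List Bool, w ≠ List.replicate w.length false → ∀ e e',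
      q (e :: (w ++ [e'])) * q w = q (e :: w) * q (w ++ [e'])) :
    (⨅ n, entropyStep p n) ≤ ⨅ n, entropyStep q n ∧
      ((⨅ n, entropyStep p n) = ⨅ n, entropyStep q n →
        ∀ w : List Bool, w ≠ List.replicate w.length false → ∀ e e',
          p (e :: (w ++ [e'])) * p w = p (e :: w) * p (w ++ [e'])) := by
  have hcons : ∀ n e, p (e :: List.replicate n false) = q (e :: List.replicate n false) := by
    intro n e
    rw [← hp.sum_append, ← hq.sum_append]
    exact sum_congr rfl fun e' _ => hcyl n e e'
  have happ : ∀ n e, p (List.replicate n false ++ [e]) = q (List.replicate n false ++ [e]) := by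
    intro n e
    rw [← hp.sum_cons, ← hq.sum_cons]
    exact sum_congr rfl fun e' _ => hcyl n e' e
  have hle : ∀ w, wordDefect q w ≤ wordDefect p w := by
    intro w
    by_cases hw : w = List.replicate w.length false
    · rw [hw]
      simp only [wordDefect, hzero, hcons, happ, hcyl, le_refl]
    · rw [hq.wordDefect_eq_zero (hmarkov w hw)]
      exact (hp.wordDefect_nonneg w).1
  set G : ℕ → ℝ := fun n => entropyStep q n - entropyStep p n with hG
  have hstep : ∀ n, G (n + 1) - G n
      = ∑ v : Fin n → Bool, (wordDefect p (List.ofFn v) - wordDefect q (List.ofFn v)) := by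
    intro n
    rw [sum_sub_distrib, ← entropyStep_sub_succ, ← entropyStep_sub_succ]
    simp only [hG]
    ring
  have hmono : Monotone G := monotone_nat_of_le_succ fun n => sub_nonneg.1 <| by
    rw [hstep]
    exact sum_nonneg fun v _ => sub_nonneg.2 (hle _)
  have hG0 : G 0 = 0 := by
    have h1 : ∀ e, p [e] = q [e] := fun e => hcons 0 e
    simp [hG, entropyStep, wordEntropy, h1, hp.nil, hq.nil, Fintype.sum_equiv
      (Equiv.funUnique (Fin 1) Bool) (fun v => negMulLog (q [v 0])) (fun e => negMulLog (q [e]))]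
  have hlim : Tendsto G atTop (𝓝 ((⨅ n, entropyStep q n) - ⨅ n, entropyStep p n)) :=
    hq.tendsto_entropyStep.sub hp.tendsto_entropyStep
  have hGle := fun n => hmono.ge_of_tendsto hlim n
  have hGnn : ∀ n, 0 ≤ G n := fun n => hG0 ▸ hmono (Nat.zero_le n)
  refine ⟨sub_nonneg.1 ((hGnn 0).trans (hGle 0)), fun heq w hw => ?_⟩
  have hz : ∀ n, G n = 0 := fun n => le_antisymm (by simpa [heq] using hGle n) (hGnn n)
  have hs := hstep w.length
  rw [hz, hz, sub_zero, eq_comm, sum_eq_zero_iff_of_nonneg fun v _ => sub_nonneg.2 (hle _)] at hs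
  have hw0 := hs (fun i => w.get i) (mem_univ _)
  rw [List.ofFn_get, hq.wordDefect_eq_zero (hmarkov w hw), sub_zero] at hw0
  exact (hp.wordDefect_nonneg w).2 hw0

end IsStationaryWeight

end Words

/-! ### The renewal weights -/

section Renewal

variable (a : ℕ → ℝ)

/-- The weight of the word `1 0ᵏ w`. -/
noncomputable def tailWeight : ℕ → List Bool → ℝ
  | k, [] => a k - a (k + 1)
  | k, false :: w => tailWeight (k + 1) w
  | k, true :: w => (a k - 2 * a (k + 1) + a (k + 2)) / (1 - a 1) * tailWeight 0 w

/-- The weight of the word `0ᵏ w`. -/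
noncomputable def headWeight : ℕ → List Bool → ℝ
  | k, [] => a k
  | k, false :: w => headWeight (k + 1) w
  | k, true :: w => (a k - a (k + 1)) / (1 - a 1) * tailWeight a 0 w

variable {a}

theorem tailWeight_replicate (k n : ℕ) (w : List Bool) :
    tailWeight a k (List.replicate n false ++ w) = tailWeight a (k + n) w := by
  induction n generalizing k with
  | zero => rfl
  | succ n ih => rw [List.replicate_succ, List.cons_append, tailWeight, ih]; congr 1; ring

theorem headWeight_replicate (k n : ℕ) (w : List Bool) :
    headWeight a k (List.replicate n false ++ w) = headWeight a (k + n) w := by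
  induction n generalizing k with
  | zero => rfl
  | succ n ih => rw [List.replicate_succ, List.cons_append, headWeight, ih]; congr 1; ring

theorem eq_replicate_append_true {w : List Bool} (hw : w ≠ List.replicate w.length false) :
    ∃ n u, w = List.replicate n false ++ true :: u := by
  induction w with
  | nil => simp at hw
  | cons e w ih =>
    cases e
    · obtain ⟨n, u, h⟩ := ih fun h => hw (by rw [List.length_cons, List.replicate_succ, ← h])
      exact ⟨n + 1, u, by rw [h, List.replicate_succ, List.cons_append]⟩
    · exact ⟨0, w, rfl⟩

variable (ha0 : a 0 = 1) (hpos : ∀ n, 0 ≤ a n) (hmono : ∀ i : ℕ, a (i + 1) ≤ a i)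
  (hconv : ∀ i : ℕ, 0 ≤ a i - 2 * a (i + 1) + a (i + 2))

include ha0 hmono in
theorem one_sub_nonneg_of_antitone : 0 ≤ 1 - a 1 := by
  have := hmono 0
  rw [ha0] at this
  simpa using this

include hconv in
theorem sub_le_one_sub (ha0 : a 0 = 1) (k : ℕ) : a k - a (k + 1) ≤ 1 - a 1 := by
  induction k with
  | zero => simp [ha0]
  | succ k ih => linarith [hconv k]

include hmono hconv in
theorem sub_eq_zero_of_one_sub_eq_zero (ha0 : a 0 = 1) (h : 1 - a 1 = 0) (k : ℕ) :
    a k - a (k + 1) = 0 :=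
  le_antisymm (h ▸ sub_le_one_sub hconv ha0 k) (sub_nonneg.2 (hmono k))

include ha0 hmono hconv in
theorem tailWeight_nonneg (k : ℕ) (w : List Bool) : 0 ≤ tailWeight a k w := by
  induction w generalizing k with
  | nil => exact sub_nonneg.2 (hmono k)
  | cons e w ih =>
    cases e
    · exact ih _
    · exact mul_nonneg (div_nonneg (hconv k) (one_sub_nonneg_of_antitone ha0 hmono)) (ih 0)

include ha0 hpos hmono hconv in
theorem headWeight_nonneg (k : ℕ) (w : List Bool) : 0 ≤ headWeight a k w := by
  induction w generalizing k with
  | nil => exact hpos k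
  | cons e w ih =>
    cases e
    · exact ih _
    · exact mul_nonneg (div_nonneg (sub_nonneg.2 (hmono k))
        (one_sub_nonneg_of_antitone ha0 hmono)) (tailWeight_nonneg ha0 hmono hconv 0 w)

include ha0 hmono hconv in
theorem div_mul_one_sub (k : ℕ) :
    (a k - a (k + 1)) / (1 - a 1) * (1 - a 1) = a k - a (k + 1) := by
  by_cases h : 1 - a 1 = 0
  · rw [h, mul_zero, sub_eq_zero_of_one_sub_eq_zero hmono hconv ha0 h]
  · exact div_mul_cancel₀ _ h

include ha0 hmono hconv in
theorem tailWeight_append (k : ℕ) (w : List Bool) :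
    tailWeight a k (w ++ [true]) + tailWeight a k (w ++ [false]) = tailWeight a k w := by
  induction w generalizing k with
  | nil =>
    have h1 := div_mul_one_sub ha0 hmono hconv k
    have h2 := div_mul_one_sub ha0 hmono hconv (k + 1)
    simp only [List.nil_append, tailWeight, ha0, zero_add]
    have : (a k - 2 * a (k + 1) + a (k + 2)) / (1 - a 1) * (1 - a 1)
        = (a k - a (k + 1)) / (1 - a 1) * (1 - a 1)
          - (a (k + 1) - a (k + 1 + 1)) / (1 - a 1) * (1 - a 1) := by ring
    rw [this, h1, h2]
    ring
  | cons e w ih =>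
    cases e
    · exact ih _
    · simp only [List.cons_append, tailWeight, ← mul_add, ih]

include ha0 hmono hconv in
theorem headWeight_append (k : ℕ) (w : List Bool) :
    headWeight a k (w ++ [true]) + headWeight a k (w ++ [false]) = headWeight a k w := by
  induction w generalizing k with
  | nil =>
    have h1 := div_mul_one_sub ha0 hmono hconv k
    simp only [List.nil_append, headWeight, tailWeight, ha0, zero_add, h1]
    ring
  | cons e w ih =>
    cases e
    · exact ih _
    · simp only [List.cons_append, headWeight, ← mul_add,
        tailWeight_append ha0 hmono hconv]

theorem headWeight_succ_add_tailWeight (k : ℕ) (w : List Bool) :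
    headWeight a (k + 1) w + tailWeight a k w = headWeight a k w := by
  induction w generalizing k with
  | nil => simp [headWeight, tailWeight]
  | cons e w ih =>
    cases e
    · exact ih _
    · simp only [headWeight, tailWeight]
      ring

include ha0 hmono hconv in
theorem headWeight_true (w : List Bool) : headWeight a 0 (true :: w) = tailWeight a 0 w := by
  rw [headWeight, ha0, zero_add]
  by_cases h : 1 - a 1 = 0
  · have hz : ∀ k, tailWeight a k w = 0 := by
      induction w with
      | nil => exact sub_eq_zero_of_one_sub_eq_zero hmono hconv ha0 h
      | cons e w ih =>
        intro k
        cases e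
        · exact ih _
        · simp [tailWeight, h]
    simp [hz]
  · rw [div_self h, one_mul]

include ha0 hpos hmono hconv in
theorem isStationaryWeight_headWeight : IsStationaryWeight (headWeight a 0) where
  nonneg := headWeight_nonneg ha0 hpos hmono hconv 0
  nil := ha0
  sum_cons w := by
    rw [Fintype.sum_bool, headWeight_true ha0 hmono hconv, headWeight, add_comm]
    exact headWeight_succ_add_tailWeight 0 w
  sum_append w := by
    rw [Fintype.sum_bool]
    exact headWeight_append ha0 hmono hconv 0 w

theorem headWeight_markov {w : List Bool} (hw : w ≠ List.replicate w.length false)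
    (e e' : Bool) :
    headWeight a 0 (e :: (w ++ [e'])) * headWeight a 0 w
      = headWeight a 0 (e :: w) * headWeight a 0 (w ++ [e']) := by
  obtain ⟨n, u, rfl⟩ := eq_replicate_append_true hw
  cases e <;>
  · simp only [List.append_assoc, List.cons_append, headWeight, headWeight_replicate,
      tailWeight_replicate, tailWeight]
    ring

include ha0 hmono hconv in
theorem headWeight_block (n : ℕ) :
    headWeight a 0 (false :: (List.replicate n false ++ [false])) = a (n + 2) ∧
    headWeight a 0 (false :: (List.replicate n false ++ [true])) = a (n + 1) - a (n + 2) ∧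
    headWeight a 0 (true :: (List.replicate n false ++ [false])) = a (n + 1) - a (n + 2) ∧
    headWeight a 0 (true :: (List.replicate n false ++ [true]))
      = a n - 2 * a (n + 1) + a (n + 2) := by
  have hcomm : 0 + 1 + n = n + 1 := by ring
  have h1 := div_mul_one_sub ha0 hmono hconv (n + 1)
  have h2 := headWeight_true ha0 hmono hconv (List.replicate n false ++ [false])
  have h3 := headWeight_true ha0 hmono hconv (List.replicate n false ++ [true])
  have h4 := tailWeight_append ha0 hmono hconv n []
  rw [tailWeight_replicate] at h2 h3
  simp only [List.nil_append, tailWeight, zero_add] at h2 h3 h4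
  refine ⟨?_, ?_, h2, ?_⟩
  · rw [headWeight, headWeight_replicate, hcomm]
    simp [headWeight]
  · rw [headWeight, headWeight_replicate, hcomm]
    simp only [headWeight, tailWeight, ha0, zero_add, h1]
  · rw [h3]
    linarith

end Renewal

/-! ### Measures with prescribed cylinder probabilities -/

section Realization

variable (p : List Bool → ℝ)

/-- The left end of the subinterval of `[0, 1)` of length `p w` associated with the word `w`
whose reversal is given. -/
noncomputable def leftEnd : List Bool → ℝ
  | [] => 0
  | e :: u => leftEnd u + if e then p (u.reverse ++ [false]) else 0

/-- The next letter after the reversed word `u` in the coding of the point `t`. -/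
noncomputable def nextLetter (t : ℝ) (u : List Bool) : Bool :=
  decide (leftEnd p u + p (u.reverse ++ [false]) ≤ t)

/-- The reversal of the word formed by the first `n` letters of the coding of `t`. -/
noncomputable def codeWord (t : ℝ) : ℕ → List Bool
  | 0 => []
  | n + 1 => nextLetter p t (codeWord t n) :: codeWord t n

/-- The sequence coding the point `t`. -/
noncomputable def codeSeq (t : ℝ) (n : ℕ) : Bool := nextLetter p t (codeWord p t n)

theorem mem_cyl_iff {w : List Bool} {x : ℕ → Bool} :
    x ∈ cyl w ↔ List.ofFn (fun i : Fin w.length => x i) = w := by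
  rw [cyl, Set.mem_ofPred_eq]
  constructor
  · intro h
    conv_rhs => rw [← List.ofFn_get w]
    exact congrArg List.ofFn (funext h)
  · intro h i
    have := congrArg (fun l : List Bool => l[i.1]?) h
    simpa using this

theorem mem_cyl_ofFn {n : ℕ} {v : Fin n → Bool} {x : ℕ → Bool} :
    x ∈ cyl (List.ofFn v) ↔ (fun i : Fin n => x i) = v := by
  rw [cyl, Set.mem_ofPred_eq, funext_iff]
  constructor
  · intro h i
    simpa using h ⟨i, by simp⟩
  · intro h i
    simpa using h ⟨i, by simpa using i.2⟩

theorem reverse_codeWord (t : ℝ) (n : ℕ) :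
    (codeWord p t n).reverse = List.ofFn fun i : Fin n => codeSeq p t i := by
  induction n with
  | zero => rfl
  | succ n ih => rw [List.ofFn_succ', codeWord, List.reverse_cons, ih]; simp [codeSeq]

theorem codeSeq_mem_cyl {t : ℝ} {w : List Bool} :
    codeSeq p t ∈ cyl w ↔ codeWord p t w.length = w.reverse := by
  rw [mem_cyl_iff, ← reverse_codeWord, List.reverse_eq_iff]

theorem measurableSet_codeWord (n : ℕ) (u : List Bool) :
    MeasurableSet {t | codeWord p t n = u} := by
  induction n generalizing u with
  | zero => simp [codeWord]
  | succ n ih =>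
    cases u with
    | nil => simp [codeWord]
    | cons e u =>
      have : {t | codeWord p t (n + 1) = e :: u}
          = {t | codeWord p t n = u} ∩ {t | nextLetter p t u = e} := by
        ext t
        simp only [codeWord, List.cons.injEq, Set.mem_ofPred_eq, Set.mem_inter_iff]
        constructor
        · rintro ⟨h1, h2⟩; exact ⟨h2, h2 ▸ h1⟩
        · rintro ⟨h1, h2⟩; exact ⟨h1.symm ▸ h2, h1⟩
      rw [this]
      refine (ih u).inter ?_
      cases e
      · have : {t | nextLetter p t u = false} = Set.Iio (leftEnd p u + p (u.reverse ++ [false])) := by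
          ext t; simp [nextLetter]
        exact this ▸ measurableSet_Iio
      · have : {t | nextLetter p t u = true} = Set.Ici (leftEnd p u + p (u.reverse ++ [false])) := by
          ext t; simp [nextLetter]
        exact this ▸ measurableSet_Ici

theorem measurable_codeSeq : Measurable (codeSeq p) := by
  refine measurable_pi_iff.2 fun n => measurable_to_bool ?_
  have : (fun t => codeSeq p t n) ⁻¹' {true}
      = ⋃ u, {t | codeWord p t n = u} ∩ {t | leftEnd p u + p (u.reverse ++ [false]) ≤ t} := by
    ext t
    simp [codeSeq, nextLetter]
  rw [this]
  exact MeasurableSet.iUnion fun u => (measurableSet_codeWord p n u).inter measurableSet_Ici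

variable {p}

theorem leftEnd_bounds (hp : IsStationaryWeight p) (u : List Bool) :
    0 ≤ leftEnd p u ∧ leftEnd p u + p u.reverse ≤ 1 := by
  induction u with
  | nil => simp [leftEnd, hp.nil]
  | cons e u ih =>
    have h := hp.sum_append u.reverse
    have h1 := hp.nonneg (u.reverse ++ [true])
    have h2 := hp.nonneg (u.reverse ++ [false])
    rw [Fintype.sum_bool] at h
    cases e <;> simp only [leftEnd, List.reverse_cons] <;> constructor <;> simp <;> linarith

theorem codeWord_eq_iff (hp : IsStationaryWeight p) {t : ℝ} (ht : t ∈ Set.Ico (0 : ℝ) 1)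
    (u : List Bool) :
    codeWord p t u.length = u ↔ t ∈ Set.Ico (leftEnd p u) (leftEnd p u + p u.reverse) := by
  induction u with
  | nil => simpa [codeWord, leftEnd, hp.nil] using ht
  | cons e u ih =>
    have h := hp.sum_append u.reverse
    have h1 := hp.nonneg (u.reverse ++ [true])
    have h2 := hp.nonneg (u.reverse ++ [false])
    rw [Fintype.sum_bool] at h
    have : codeWord p t (e :: u).length = e :: u ↔
        codeWord p t u.length = u ∧ nextLetter p t u = e := by
      simp only [codeWord, List.length_cons, List.cons.injEq]
      constructor
      · rintro ⟨h1, h2⟩; exact ⟨h2, h2 ▸ h1⟩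
      · rintro ⟨h1, h2⟩; exact ⟨h1.symm ▸ h2, h1⟩
    rw [this, ih, nextLetter]
    cases e <;> simp only [leftEnd, List.reverse_cons, Set.mem_Ico] <;> simp <;> grind

theorem measurableSet_cyl (w : List Bool) : MeasurableSet (cyl w) := by
  have : cyl w = ⋂ i : Fin w.length, (fun x : ℕ → Bool => x i) ⁻¹' {w.get i} := by
    ext x; simp [cyl]
  rw [this]
  exact MeasurableSet.iInter fun i => measurable_pi_apply _ (measurableSet_singleton _)

theorem exists_measure_cyl_eq (hp : IsStationaryWeight p) :
    ∃ μ : Measure (ℕ → Bool), IsProbabilityMeasure μ ∧ ∀ w, μ.real (cyl w) = p w := by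
  have hm := measurable_codeSeq p
  refine ⟨(volume.restrict (Set.Ico (0 : ℝ) 1)).map (codeSeq p), ?_, fun w => ?_⟩
  · have : IsProbabilityMeasure (volume.restrict (Set.Ico (0 : ℝ) 1)) := ⟨by simp⟩
    exact Measure.isProbabilityMeasure_map hm.aemeasurable
  · have hpre : codeSeq p ⁻¹' cyl w ∩ Set.Ico 0 1
        = Set.Ico (leftEnd p w.reverse) (leftEnd p w.reverse + p w) := by
      have hb := leftEnd_bounds hp w.reverse
      rw [List.reverse_reverse] at hb
      ext t
      constructor
      · rintro ⟨h1, h2⟩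
        have := (codeWord_eq_iff hp h2 w.reverse).1 (by
          rw [List.length_reverse]; exact (codeSeq_mem_cyl p).1 h1)
        rwa [List.reverse_reverse] at this
      · intro h
        have ht : t ∈ Set.Ico (0 : ℝ) 1 := ⟨hb.1.trans h.1, h.2.trans_le hb.2⟩
        have := (codeWord_eq_iff hp ht w.reverse).2 (by rwa [List.reverse_reverse])
        rw [List.length_reverse] at this
        exact ⟨(codeSeq_mem_cyl p).2 this, ht⟩
    rw [map_measureReal_apply hm (measurableSet_cyl w),
      measureReal_restrict_apply (hm (measurableSet_cyl w)), hpre, Real.volume_real_Ico]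
    simp [hp.nonneg w]

end Realization

/-! ### Entropy of random variables with finitely many values -/

section FiniteEntropy

open Real Finset

variable {Ω α β γ : Type*} [MeasurableSpace Ω] {μ : Measure Ω} [IsProbabilityMeasure μ]
  [Fintype α] [MeasurableSpace α] [MeasurableSingletonClass α]
  [Fintype β] [MeasurableSpace β] [MeasurableSingletonClass β]
  [Fintype γ] [MeasurableSpace γ] [MeasurableSingletonClass γ]

/-- The Shannon entropy of a random variable with finitely many values. -/
noncomputable def shannonEntropy {Ω α : Type*} [MeasurableSpace Ω] [Fintype α]
    (μ : Measure Ω) (f : Ω → α) : ℝ :=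
  ∑ a, negMulLog (μ.real (f ⁻¹' {a}))

omit [MeasurableSpace α] [MeasurableSingletonClass α] [Fintype α] in
theorem measureReal_comp_preimage [DecidableEq α] {g : Ω → β} (hg : Measurable g) (φ : β → α)
    (a : α) :
    μ.real ((fun ω => φ (g ω)) ⁻¹' {a}) = ∑ b with φ b = a, μ.real (g ⁻¹' {b}) := by
  rw [sum_measureReal_preimage_singleton _ fun b _ => hg (measurableSet_singleton b)]
  congr 1
  ext ω
  simp

omit [MeasurableSpace α] [MeasurableSingletonClass α] in
theorem shannonEntropy_comp_le {g : Ω → β} (hg : Measurable g) (φ : β → α) :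
    shannonEntropy μ (fun ω => φ (g ω)) ≤ shannonEntropy μ g := by
  classical
  simp only [shannonEntropy, measureReal_comp_preimage hg]
  rw [← sum_fiberwise univ φ fun b => negMulLog (μ.real (g ⁻¹' {b}))]
  exact sum_le_sum fun a _ => negMulLog_sum_le _ _ fun _ _ => measureReal_nonneg

omit [MeasurableSpace α] [MeasurableSingletonClass α] [MeasurableSpace β]
  [MeasurableSingletonClass β] [MeasurableSpace γ] [MeasurableSingletonClass γ] in
theorem measureReal_triple_comp_preimage [MeasurableSpace (α × β × γ)]
    [MeasurableSingletonClass (α × β × γ)] {δ : Type*} [DecidableEq δ] {f : Ω → α × β × γ}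
    (hf : Measurable f) (φ : α × β × γ → δ) (d : δ) :
    μ.real ((fun ω => φ (f ω)) ⁻¹' {d})
      = ∑ a, ∑ b, ∑ c, if φ (a, b, c) = d then μ.real (f ⁻¹' {(a, b, c)}) else 0 := by
  rw [measureReal_comp_preimage hf φ d, sum_filter, Fintype.sum_prod_type]
  simp only [Fintype.sum_prod_type]

theorem shannonEntropy_submodular {f : Ω → α} {g : Ω → β} {h : Ω → γ} (hf : Measurable f)
    (hg : Measurable g) (hh : Measurable h) :
    shannonEntropy μ (fun ω => (f ω, g ω, h ω)) + shannonEntropy μ h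
      ≤ shannonEntropy μ (fun ω => (f ω, h ω)) + shannonEntropy μ (fun ω => (g ω, h ω)) := by
  classical
  have hm : Measurable fun ω => (f ω, g ω, h ω) := hf.prodMk (hg.prodMk hh)
  set x : α → β → γ → ℝ := fun a b c => μ.real ((fun ω => (f ω, g ω, h ω)) ⁻¹' {(a, b, c)})
    with hx
  have h1 : ∀ c, μ.real (h ⁻¹' {c}) = ∑ a, ∑ b, x a b c := fun c => by
    rw [show h = fun ω => (fun y : α × β × γ => y.2.2) (f ω, g ω, h ω) from rfl,
      measureReal_triple_comp_preimage hm (fun y => y.2.2)]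
    simp [hx]
  have h2 : ∀ a c, μ.real ((fun ω => (f ω, h ω)) ⁻¹' {(a, c)}) = ∑ b, x a b c := fun a c => by
    rw [show (fun ω => (f ω, h ω)) = fun ω => (fun y : α × β × γ => (y.1, y.2.2))
      (f ω, g ω, h ω) from rfl, measureReal_triple_comp_preimage hm (fun y => (y.1, y.2.2)),
      sum_eq_single a]
    · simp [hx]
    · intro a' _ ha; simp [ha]
    · simp
  have h3 : ∀ b c, μ.real ((fun ω => (g ω, h ω)) ⁻¹' {(b, c)}) = ∑ a, x a b c := fun b c => by
    rw [show (fun ω => (g ω, h ω)) = fun ω => (fun y : α × β × γ => y.2)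
      (f ω, g ω, h ω) from rfl, measureReal_triple_comp_preimage hm (fun y => y.2)]
    refine sum_congr rfl fun a _ => ?_
    rw [sum_eq_single b]
    · simp [hx]
    · intro b' _ hb; simp [hb]
    · simp
  simp only [shannonEntropy, Fintype.sum_prod_type, h1, h2, h3]
  have e1 : ∑ a, ∑ b, ∑ c, negMulLog (μ.real ((fun ω => (f ω, g ω, h ω)) ⁻¹' {(a, b, c)}))
      = ∑ c, ∑ a, ∑ b, negMulLog (x a b c) := by
    exact (sum_congr rfl fun a _ => sum_comm).trans sum_comm
  rw [e1, sum_comm (s := (Finset.univ : Finset α)), sum_comm (s := (Finset.univ : Finset β)),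
    ← sum_add_distrib, ← sum_add_distrib]
  exact sum_le_sum fun c _ =>
    (negMulLog_submodular (fun a b => x a b c) fun _ _ => measureReal_nonneg).1

/-- Conditional entropy decreases when conditioning on more. -/
theorem condEntropy_le_comp {f : Ω → α} {g : Ω → β} (hf : Measurable f) (hg : Measurable g)
    (φ : β → γ) (hφ : Measurable φ) :
    shannonEntropy μ (fun ω => (f ω, g ω)) - shannonEntropy μ g
      ≤ shannonEntropy μ (fun ω => (f ω, φ (g ω))) - shannonEntropy μ (fun ω => φ (g ω)) := by
  have h := shannonEntropy_submodular (μ := μ) hf hg (hφ.comp hg)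
  have h1 := shannonEntropy_comp_le (μ := μ) (hf.prodMk (hg.prodMk (hφ.comp hg)))
    fun y : α × β × γ => (y.1, y.2.1)
  have h2 := shannonEntropy_comp_le (μ := μ) hg fun b => (b, φ b)
  simp only [Function.comp_def] at h h1 h2
  linarith

theorem shannonEntropy_prod_le {f : Ω → α} {g : Ω → β} (hf : Measurable f) (hg : Measurable g) :
    shannonEntropy μ (fun ω => (f ω, g ω)) ≤ shannonEntropy μ f + shannonEntropy μ g := by
  have h := condEntropy_le_comp (μ := μ) hf hg (fun _ => ()) measurable_const
  have h1 := shannonEntropy_comp_le (μ := μ) hf fun a => (a, ())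
  have h2 : shannonEntropy μ (fun _ : Ω => ()) = 0 := by simp [shannonEntropy]
  linarith

/-- Subadditivity of the conditional entropy of a finite family of random variables. -/
theorem condEntropy_pi_le {f : ℕ → Ω → α} {g : Ω → β} (hf : ∀ i, Measurable (f i))
    (hg : Measurable g) (n : ℕ) :
    shannonEntropy μ (fun ω => ((fun i : Fin n => f i ω), g ω)) - shannonEntropy μ g
      ≤ ∑ i ∈ range n, (shannonEntropy μ (fun ω => (f i ω, g ω)) - shannonEntropy μ g) := by
  induction n with
  | zero =>
    have := shannonEntropy_comp_le (μ := μ) hg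
      fun b => ((Fin.elim0 : Fin 0 → α), b)
    have h2 : (fun ω => ((fun i : Fin 0 => f i ω), g ω))
        = fun ω => ((Fin.elim0 : Fin 0 → α), g ω) := by
      funext ω; exact Prod.ext (Subsingleton.elim _ _) rfl
    rw [h2]
    simpa using this
  | succ n ih =>
    have hm : ∀ n, Measurable fun ω => fun i : Fin n => f i ω := fun n =>
      measurable_pi_iff.2 fun i => hf i
    have h := shannonEntropy_submodular (μ := μ) (hf n) (hm n) hg
    have h1 := shannonEntropy_comp_le (μ := μ) ((hf n).prodMk ((hm n).prodMk hg))
      fun y : α × (Fin n → α) × β => ((Fin.snoc y.2.1 y.1 : Fin (n + 1) → α), y.2.2)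
    have h2 : (fun ω => ((Fin.snoc (fun i : Fin n => f i ω) (f n ω) : Fin (n + 1) → α), g ω))
        = fun ω => ((fun i : Fin (n + 1) => f i ω), g ω) := by
      funext ω
      refine Prod.ext (funext fun i => ?_) rfl
      refine Fin.lastCases ?_ (fun i => ?_) i <;> simp
    simp only [h2] at h1
    rw [sum_range_succ]
    linarith

omit [IsProbabilityMeasure μ] in
theorem shannonEntropy_comp_measurePreserving {T : Ω → Ω} (hT : MeasurePreserving T μ μ)
    {f : Ω → α} (hf : Measurable f) :
    shannonEntropy μ (fun ω => f (T ω)) = shannonEntropy μ f := by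
  refine sum_congr rfl fun a _ => ?_
  rw [show (fun ω => f (T ω)) ⁻¹' {a} = T ⁻¹' (f ⁻¹' {a}) from rfl,
    hT.measureReal_preimage (hf (measurableSet_singleton a)).nullMeasurableSet]

theorem shannonEntropy_bool {f : Ω → Bool} (hf : Measurable f) :
    shannonEntropy μ f = binEntropy (μ.real (f ⁻¹' {true})) := by
  have h : μ.real (f ⁻¹' {false}) = 1 - μ.real (f ⁻¹' {true}) := by
    rw [← probReal_compl_eq_one_sub (hf (measurableSet_singleton true))]
    congr 1
    ext ω
    simp
  rw [shannonEntropy, Fintype.sum_bool, h, binEntropy_eq_negMulLog_add_negMulLog_one_sub]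

end FiniteEntropy

/-! ### Shift-invariant measures and their cylinder probabilities -/

section Cylinders

open Finset

theorem mem_cyl_cons {e : Bool} {w : List Bool} {x : ℕ → Bool} :
    x ∈ cyl (e :: w) ↔ x 0 = e ∧ shift x ∈ cyl w := by
  simp only [cyl, Set.mem_ofPred_eq, List.length_cons]
  rw [Fin.forall_fin_succ]
  simp [shift]

theorem mem_cyl_append {e : Bool} {w : List Bool} {x : ℕ → Bool} :
    x ∈ cyl (w ++ [e]) ↔ x ∈ cyl w ∧ x w.length = e := by
  induction w generalizing x with
  | nil => simp [cyl]
  | cons e' w ih => rw [List.cons_append, mem_cyl_cons, mem_cyl_cons, ih, and_assoc]; rfl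

theorem measurable_shift : Measurable shift :=
  measurable_pi_iff.2 fun n => measurable_pi_apply (n + 1)

/-- The first `n` letters of a sequence. -/
def firstWord (n : ℕ) (x : ℕ → Bool) : Fin n → Bool := fun i => x i

theorem measurable_firstWord (n : ℕ) : Measurable (firstWord n) :=
  measurable_pi_iff.2 fun i => measurable_pi_apply i.1

theorem cyl_ofFn {n : ℕ} (v : Fin n → Bool) : cyl (List.ofFn v) = firstWord n ⁻¹' {v} := by
  ext x
  exact mem_cyl_ofFn

theorem exists_firstWord_preimage {t : Set (ℕ → Bool)}
    (ht : t ∈ measurableCylinders fun _ : ℕ => Bool) :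
    ∃ m, ∀ n, m ≤ n → ∃ S : Set (Fin n → Bool), t = firstWord n ⁻¹' S := by
  obtain ⟨s, S, -, rfl⟩ := (mem_measurableCylinders t).1 ht
  refine ⟨s.sup id + 1, fun n hn => ⟨{v | (fun i : s => v ⟨i.1, ?_⟩) ∈ S}, rfl⟩⟩
  exact (Nat.lt_succ_of_le (le_sup (f := id) i.2)).trans_le hn

theorem measure_ext_of_cyl {μ ν : Measure (ℕ → Bool)} [IsProbabilityMeasure μ]
    [IsProbabilityMeasure ν] (h : ∀ w, μ.real (cyl w) = ν.real (cyl w)) : μ = ν := by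
  refine ext_of_generate_finite _ (generateFrom_measurableCylinders (α := fun _ : ℕ => Bool)).symm
    isPiSystem_measurableCylinders (fun t ht => ?_) (by simp)
  obtain ⟨m, hm⟩ := exists_firstWord_preimage ht
  obtain ⟨S, rfl⟩ := hm m le_rfl
  rw [← measureReal_eq_measureReal_iff]
  classical
  have hS : ∀ ρ : Measure (ℕ → Bool), IsProbabilityMeasure ρ →
      ρ.real (firstWord m ⁻¹' S) = ∑ v ∈ S.toFinset, ρ.real (cyl (List.ofFn v)) := by
    intro ρ _
    simp only [cyl_ofFn]
    rw [sum_measureReal_preimage_singleton _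
      fun v _ => measurable_firstWord m (measurableSet_singleton v), Set.coe_toFinset]
  rw [hS μ inferInstance, hS ν inferInstance]
  exact sum_congr rfl fun v _ => h _

theorem measureReal_eq_sum_inter {Ω : Type*} [MeasurableSpace Ω] (μ : Measure Ω)
    [IsProbabilityMeasure μ] {f : Ω → Bool} (hf : Measurable f) (A : Set Ω) :
    μ.real A = ∑ e, μ.real (A ∩ f ⁻¹' {e}) := by
  rw [Fintype.sum_bool, ← measureReal_inter_add_sdiff (s := A) (hf (measurableSet_singleton true))]
  congr 2
  ext ω
  simp

theorem measureReal_shift_preimage_cyl (μ : Measure (ℕ → Bool)) [IsProbabilityMeasure μ]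
    (w : List Bool) : ∑ e, μ.real (cyl (e :: w)) = μ.real (shift ⁻¹' cyl w) := by
  rw [measureReal_eq_sum_inter μ (measurable_pi_apply 0) (shift ⁻¹' cyl w)]
  refine sum_congr rfl fun e _ => congrArg _ ?_
  ext x
  rw [mem_cyl_cons, and_comm]
  rfl

theorem measurePreserving_shift_iff {μ : Measure (ℕ → Bool)} [IsProbabilityMeasure μ] :
    MeasurePreserving shift μ μ ↔ ∀ w, ∑ e, μ.real (cyl (e :: w)) = μ.real (cyl w) := by
  simp only [measureReal_shift_preimage_cyl]
  constructor
  · intro h w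
    exact h.measureReal_preimage (measurableSet_cyl w).nullMeasurableSet
  · intro h
    have := Measure.isProbabilityMeasure_map (μ := μ) measurable_shift.aemeasurable
    refine ⟨measurable_shift, measure_ext_of_cyl fun w => ?_⟩
    rw [map_measureReal_apply measurable_shift (measurableSet_cyl w), h]

theorem isStationaryWeight_cyl {μ : Measure (ℕ → Bool)} [IsProbabilityMeasure μ]
    (hμ : MeasurePreserving shift μ μ) : IsStationaryWeight fun w => μ.real (cyl w) where
  nonneg _ := measureReal_nonneg
  nil := by
    have : cyl [] = Set.univ := by ext x; simp [cyl]
    simp [this]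
  sum_cons := measurePreserving_shift_iff.1 hμ
  sum_append w := by
    rw [measureReal_eq_sum_inter μ (measurable_pi_apply w.length) (cyl w)]
    refine sum_congr rfl fun e _ => congrArg _ ?_
    ext x
    rw [mem_cyl_append]
    rfl

theorem shannonEntropy_firstWord (μ : Measure (ℕ → Bool)) (n : ℕ) :
    shannonEntropy μ (firstWord n) = wordEntropy (fun w => μ.real (cyl w)) n := by
  simp only [shannonEntropy, wordEntropy, cyl_ofFn]

end Cylinders

/-! ### The Kolmogorov–Sinai entropy of the shift -/

section KolmogorovSinai

open Finset

theorem partInfo_eq_shannonEntropy {Ω : Type*} [MeasurableSpace Ω] (T : Ω → Ω) (μ : Measure Ω)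
    [IsProbabilityMeasure μ] {k : ℕ} (Q : Ω → Fin k) (n : ℕ) :
    partInfo T μ (fun x => (Q x : ℕ)) n
      = ENNReal.ofReal (shannonEntropy μ fun x => fun i : Fin n => Q (T^[i] x)) := by
  set enc : (Fin n → Fin k) → List ℕ := fun v => List.ofFn fun i => (v i : ℕ) with henc
  have hinj : Function.Injective enc := fun v w h => by
    funext i
    exact Fin.ext (congrFun (List.ofFn_injective h) i)
  have hF : ∀ x, ((List.range n).map fun j => (Q (T^[j] x) : ℕ))
      = enc fun i : Fin n => Q (T^[i] x) := fun x => by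
    rw [henc]
    simp only [List.ofFn_eq_map]
    rw [← List.map_coe_finRange_eq_range, List.map_map]
    rfl
  have hpre : ∀ v, (fun x => (List.range n).map fun j => (Q (T^[j] x) : ℕ)) ⁻¹' {enc v}
      = (fun x => fun i : Fin n => Q (T^[i] x)) ⁻¹' {v} := fun v => by
    ext x
    simp only [Set.mem_preimage, hF, Set.mem_singleton_iff, hinj.eq_iff]
  rw [partInfo, ← hinj.tsum_eq, tsum_fintype, shannonEntropy, ENNReal.ofReal_sum_of_nonneg]
  · exact sum_congr rfl fun v _ => by rw [hpre]; rfl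
  · exact fun v _ => Real.negMulLog_nonneg measureReal_nonneg measureReal_le_one
  · intro l hl
    by_contra hne
    refine hl ?_
    have : (fun x => (List.range n).map fun j => (Q (T^[j] x) : ℕ)) ⁻¹' {l} = ∅ := by
      ext x
      simp only [Set.mem_preimage, hF, Set.mem_singleton_iff, Set.mem_empty_iff_false, iff_false]
      exact fun h => hne ⟨_, h⟩
    simp [this]

variable {μ : Measure (ℕ → Bool)} [IsProbabilityMeasure μ]

theorem exists_condEntropy_firstWord_le {k : ℕ} {Q : (ℕ → Bool) → Fin k} (hQ : Measurable Q)
    {ε : ℝ} (hε : 0 < ε) :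
    ∃ m, shannonEntropy μ (fun x => (Q x, firstWord m x)) - shannonEntropy μ (firstWord m)
      ≤ ε := by
  classical
  have : Nonempty (Fin k) := ⟨Q fun _ => false⟩
  have hk : (0 : ℝ) < k := Nat.cast_pos.2 (Fin.pos (Q fun _ => false))
  obtain ⟨δ, hδ, hbin⟩ : ∃ δ > 0, ∀ t, 0 ≤ t → t < δ → Real.binEntropy t < ε / k := by
    have h := Real.binEntropy_continuous.tendsto 0
    rw [Real.binEntropy_zero] at h
    obtain ⟨δ, hδ, h⟩ := Metric.eventually_nhds_iff.1 (h.eventually_lt_const (div_pos hε hk))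
    exact ⟨δ, hδ, fun t h0 ht => h (by rwa [Real.dist_eq, sub_zero, abs_of_nonneg h0])⟩
  set A : ℕ → Set (ℕ → Bool) := fun q => {x | (Q x : ℕ) = q} with hA
  have hAm : ∀ q, MeasurableSet (A q) := fun q =>
    hQ (MeasurableSet.of_discrete (s := {i : Fin k | (i : ℕ) = q}))
  have hdense : μ.MeasureDense (measurableCylinders fun _ : ℕ => Bool) :=
    Measure.MeasureDense.of_generateFrom_isSetAlgebra_finite μ
      isSetAlgebra_measurableCylinders generateFrom_measurableCylinders.symm
  choose t ht htA using fun q => hdense.approx (A q) (hAm q) (measure_ne_top _ _) δ hδ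
  choose M hM using fun q => exists_firstWord_preimage (ht q)
  set m := (range k).sup M with hm
  refine ⟨m, ?_⟩
  have hpm := measurable_firstWord m
  set f : ℕ → (ℕ → Bool) → Bool := fun q x => decide (x ∈ A q) with hf
  have hfm : ∀ q, Measurable (f q) := fun q => measurable_to_bool (by
    convert hAm q using 1
    ext x; simp [hf])
  have hone : ∀ q ∈ range k, shannonEntropy μ (fun x => (f q x, firstWord m x))
      - shannonEntropy μ (firstWord m) ≤ ε / k := by
    intro q hq
    obtain ⟨S, hS⟩ := hM q m (le_sup hq)
    set e : (ℕ → Bool) → Bool := fun x => decide (x ∈ symmDiff (A q) (t q)) with he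
    have hpre : e ⁻¹' {true} = symmDiff (A q) (t q) := by ext x; simp [he]
    have hem : Measurable e := measurable_to_bool (by
      rw [hpre]
      exact (hAm q).symmDiff (MeasurableSet.of_mem_measurableCylinders (ht q)))
    have h1 := shannonEntropy_comp_le (μ := μ) (hem.prodMk hpm)
      fun y : Bool × (Fin m → Bool) => (xor y.1 (decide (y.2 ∈ S)), y.2)
    have h2 : (fun x => (xor (e x) (decide (firstWord m x ∈ S)), firstWord m x))
        = fun x => (f q x, firstWord m x) := by
      funext x
      refine Prod.ext ?_ rfl
      simp only [he, hf, hS, Set.mem_symmDiff, Set.mem_preimage]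
      by_cases h3 : x ∈ A q <;> by_cases h4 : firstWord m x ∈ S <;> simp [h3, h4]
    simp only [h2] at h1
    have h3 := shannonEntropy_prod_le (μ := μ) hem hpm
    rw [shannonEntropy_bool hem, hpre] at h3
    have h4 := hbin (μ.real (symmDiff (A q) (t q))) measureReal_nonneg
      (by rw [measureReal_def]; exact ENNReal.toReal_lt_of_lt_ofReal (htA q))
    linarith
  have hsum := (condEntropy_pi_le (μ := μ) hfm hpm k).trans (sum_le_sum hone)
  rw [sum_const, card_range, nsmul_eq_mul, mul_div_cancel₀ _ hk.ne'] at hsum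
  refine le_trans (sub_le_sub_right ?_ _) hsum
  set ψ : Fin k → Fin k → Bool := fun q i => decide (q = i) with hψ
  have hψinj : Function.Injective ψ := fun q r h => by
    have := congrFun h r
    simpa [hψ] using this
  have hmeas : Measurable fun x => ((fun i : Fin k => f i x), firstWord m x) :=
    (measurable_pi_iff.2 fun i : Fin k => hfm i).prodMk hpm
  have h1 := shannonEntropy_comp_le (μ := μ) hmeas
    fun y : (Fin k → Bool) × (Fin m → Bool) => (Function.invFun ψ y.1, y.2)
  have h2 : ∀ x, Function.invFun ψ (fun i : Fin k => f i x) = Q x := fun x => by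
    rw [← Function.leftInverse_invFun hψinj (Q x)]
    congr 1
    funext i
    simp [hψ, hf, hA, Fin.ext_iff]
  simpa only [h2] using h1

theorem shift_iterate_apply (i : ℕ) (x : ℕ → Bool) (j : ℕ) : shift^[i] x j = x (i + j) := by
  induction i generalizing x with
  | zero => simp
  | succ i ih => rw [Function.iterate_succ_apply, ih, shift]; congr 1; ring

theorem shannonEntropy_itinerary_le (hμ : MeasurePreserving shift μ μ) {k : ℕ}
    {Q : (ℕ → Bool) → Fin k} (hQ : Measurable Q) (m n : ℕ) :
    shannonEntropy μ (fun x => fun i : Fin n => Q (shift^[i] x))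
      ≤ shannonEntropy μ (firstWord (n + m)) + n * (shannonEntropy μ
        (fun x => (Q x, firstWord m x)) - shannonEntropy μ (firstWord m)) := by
  have hf : ∀ i, Measurable fun x => Q (shift^[i] x) := fun i =>
    hQ.comp (measurable_shift.iterate i)
  have hg := measurable_firstWord (n + m)
  have h1 := shannonEntropy_comp_le (μ := μ)
    ((measurable_pi_iff.2 fun i : Fin n => hf i).prodMk hg)
    (Prod.fst : (Fin n → Fin k) × (Fin (n + m) → Bool) → _)
  have h2 := condEntropy_pi_le (μ := μ) hf hg n
  have h3 : ∀ i ∈ range n, shannonEntropy μ (fun x => (Q (shift^[i] x), firstWord (n + m) x))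
      - shannonEntropy μ (firstWord (n + m)) ≤ shannonEntropy μ (fun x => (Q x, firstWord m x))
        - shannonEntropy μ (firstWord m) := by
    intro i hi
    have hi' := mem_range.1 hi
    have h := condEntropy_le_comp (μ := μ) (hf i) hg
      (fun (v : Fin (n + m) → Bool) (j : Fin m) => v ⟨i + j, by omega⟩)
      (measurable_pi_iff.2 fun j => measurable_pi_apply _)
    have hφ : ∀ x, (fun j : Fin m => firstWord (n + m) x ⟨i + j, by omega⟩)
        = firstWord m (shift^[i] x) := fun x => by
      funext j
      simp only [firstWord, shift_iterate_apply]
    simp only [hφ] at h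
    rw [show (fun x (j : Fin m) => firstWord (n + m) x ⟨i + j, by omega⟩)
      = fun x => firstWord m (shift^[i] x) from funext hφ] at h
    rwa [shannonEntropy_comp_measurePreserving (hμ.iterate i)
      (hQ.prodMk (measurable_firstWord m)),
      shannonEntropy_comp_measurePreserving (hμ.iterate i) (measurable_firstWord m)] at h
  have h4 := sum_le_sum h3
  rw [sum_const, card_range, nsmul_eq_mul] at h4
  linarith

theorem IsStationaryWeight.wordEntropy_add_le {p : List Bool → ℝ} (hp : IsStationaryWeight p)
    (n m : ℕ) : wordEntropy p (n + m) ≤ wordEntropy p n + m * entropyStep p 0 := by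
  induction m with
  | zero => simp
  | succ m ih =>
    have := hp.antitone_entropyStep (Nat.zero_le (n + m))
    have h : entropyStep p (n + m) = wordEntropy p (n + (m + 1)) - wordEntropy p (n + m) := rfl
    push_cast
    linarith

/-- The coordinate partition is a generator: the Kolmogorov–Sinai entropy of the shift is the
limit of the increments of the entropy of cylinders. -/
theorem ksEntropy_shift (hμ : MeasurePreserving shift μ μ) :
    ksEntropy shift μ = ENNReal.ofReal (⨅ n, entropyStep (fun w => μ.real (cyl w)) n) := by
  have hp := isStationaryWeight_cyl hμ
  set p : List Bool → ℝ := fun w => μ.real (cyl w) with hp_def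
  set d := ⨅ n, entropyStep p n with hd
  have hlim := hp.tendsto_wordEntropy_div
  rw [← hd] at hlim
  have hdiv : ∀ (x : ℝ) (n : ℕ), 0 < n →
      ENNReal.ofReal x / (n : ℝ≥0∞) = ENNReal.ofReal (x / n) := fun x n hn => by
    rw [ENNReal.ofReal_div_of_pos (Nat.cast_pos.2 hn), ENNReal.ofReal_natCast]
  refine le_antisymm (iSup_le fun P => iSup_le fun hP => iSup_le fun hfin => ?_) ?_
  · obtain ⟨K, hK⟩ := hfin.bddAbove
    set Q : (ℕ → Bool) → Fin (K + 1) := fun x =>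
      ⟨P x, Nat.lt_succ_of_le (hK (Set.mem_range_self x))⟩ with hQ_def
    have hQ : Measurable Q := measurable_to_countable' fun q => by
      convert hP (measurableSet_singleton (q : ℕ)) using 1
      ext x
      simp [hQ_def, Fin.ext_iff]
    have hd0 : 0 ≤ d := Real.iInf_nonneg hp.entropyStep_nonneg
    refine ENNReal.le_of_forall_pos_le_add fun ε hε _ => ?_
    obtain ⟨m, hm⟩ := exists_condEntropy_firstWord_le (μ := μ) hQ (NNReal.coe_pos.2 hε)
    have hbound : ∀ᶠ n : ℕ in atTop, partInfo shift μ P n / (n : ℝ≥0∞)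
        ≤ ENNReal.ofReal (wordEntropy p n / n + m * entropyStep p 0 / n + ε) := by
      filter_upwards [eventually_gt_atTop 0] with n hn
      have hn' : (0 : ℝ) < n := Nat.cast_pos.2 hn
      rw [show P = fun x => (Q x : ℕ) from rfl, partInfo_eq_shannonEntropy, hdiv _ n hn]
      refine ENNReal.ofReal_le_ofReal ?_
      rw [div_le_iff₀ hn']
      have h1 := shannonEntropy_itinerary_le hμ hQ m n
      have h2 := mul_le_mul_of_nonneg_left hm hn'.le
      have h3 := hp.wordEntropy_add_le n m
      rw [shannonEntropy_firstWord μ (n + m)] at h1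
      field_simp
      linarith
    have hlim2 : Tendsto (fun n : ℕ => ENNReal.ofReal
        (wordEntropy p n / n + m * entropyStep p 0 / n + ε)) atTop
        (𝓝 (ENNReal.ofReal (d + 0 + ε))) :=
      ENNReal.tendsto_ofReal ((hlim.add (tendsto_const_div_atTop_nhds_zero_nat _)).add_const _)
    refine (liminf_le_liminf hbound).trans ?_
    rw [hlim2.liminf_eq, add_zero, ENNReal.ofReal_add hd0 (NNReal.coe_nonneg ε),
      ENNReal.ofReal_coe_nnreal]
  · set Q : (ℕ → Bool) → Fin 2 := fun x => if x 0 then 1 else 0 with hQ_def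
    have hQ : Measurable Q := (measurable_of_countable fun b : Bool =>
      if b then (1 : Fin 2) else 0).comp (measurable_pi_apply 0)
    have hQm : Measurable fun x => (Q x : ℕ) := (measurable_of_countable _).comp hQ
    have hfin : (Set.range fun x => (Q x : ℕ)).Finite :=
      (Set.finite_range fun i : Fin 2 => (i : ℕ)).subset (Set.range_comp_subset_range Q _)
    refine le_trans ?_ (le_iSup_of_le (fun x => (Q x : ℕ)) (le_iSup_of_le hQm
      (le_iSup_of_le hfin le_rfl)))
    rw [← (ENNReal.tendsto_ofReal hlim).liminf_eq]
    refine liminf_le_liminf ?_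
    filter_upwards [eventually_gt_atTop 0] with n hn
    rw [partInfo_eq_shannonEntropy, hdiv _ n hn]
    refine ENNReal.ofReal_le_ofReal (div_le_div_of_nonneg_right ?_ (Nat.cast_nonneg n))
    rw [← shannonEntropy_firstWord]
    have hV : Measurable fun x => fun i : Fin n => Q (shift^[i] x) :=
      measurable_pi_iff.2 fun i => hQ.comp (measurable_shift.iterate i)
    have h := shannonEntropy_comp_le (μ := μ) hV fun v i => decide (v i = 1)
    refine le_trans (le_of_eq (congrArg (shannonEntropy μ) ?_)) h
    funext x i
    simp only [hQ_def, firstWord, shift_iterate_apply, add_zero]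
    cases x i <;> simp

end KolmogorovSinai

/-! ### The measure of maximal entropy -/

namespace IsStationaryWeight

variable {p q : List Bool → ℝ}

/-- Stationary weights satisfying the Markov relation around all words which are not blocks of
zeros are determined by their values at the blocks `ε 0ⁿ ε'`. -/
theorem eq_of_markov (hp : IsStationaryWeight p) (hq : IsStationaryWeight q)
    (hcyl : ∀ n e e', p (e :: (List.replicate n false ++ [e']))
      = q (e :: (List.replicate n false ++ [e'])))
    (hpm : ∀ w : List Bool, w ≠ List.replicate w.length false → ∀ e e',
      p (e :: (w ++ [e'])) * p w = p (e :: w) * p (w ++ [e']))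
    (hqm : ∀ w : List Bool, w ≠ List.replicate w.length false → ∀ e e',
      q (e :: (w ++ [e'])) * q w = q (e :: w) * q (w ++ [e'])) (w : List Bool) :
    p w = q w := by
  have hzero : ∀ {r : List Bool → ℝ}, IsStationaryWeight r → ∀ w, r w = 0 →
      ∀ e e', r (e :: (w ++ [e'])) = 0 := by
    intro r hr w hw e e'
    have h1 : r (e :: (w ++ [e'])) ≤ r (e :: w) :=
      (Finset.single_le_sum (f := fun e' => r (e :: w ++ [e']))
        (fun _ _ => hr.nonneg _) (Finset.mem_univ e')).trans_eq (hr.sum_append (e :: w))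
    have h2 : r (e :: w) ≤ r w :=
      (Finset.single_le_sum (f := fun e => r (e :: w))
        (fun _ _ => hr.nonneg _) (Finset.mem_univ e)).trans_eq (hr.sum_cons w)
    exact le_antisymm ((h1.trans h2).trans_eq hw) (hr.nonneg _)
  induction hn : w.length using Nat.strong_induction_on generalizing w with
  | _ n ih =>
    subst hn
    rcases w with _ | ⟨e, u⟩
    · rw [hp.nil, hq.nil]
    rcases List.eq_nil_or_concat u with rfl | ⟨m, e', rfl⟩
    · rw [← hp.sum_append, ← hq.sum_append]
      exact Finset.sum_congr rfl fun e' _ => hcyl 0 e e'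
    simp only [List.concat_eq_append, List.length_cons, List.length_append, List.length_nil] at ih ⊢
    by_cases hm : m = List.replicate m.length false
    · rw [hm]
      exact hcyl _ e e'
    have h0 := ih m.length (by omega) m rfl
    have h1 := ih (e :: m).length (by simp) (e :: m) rfl
    have h2 := ih (m ++ [e']).length (by simp) (m ++ [e']) rfl
    by_cases hz : p m = 0
    · rw [hzero hp m hz, hzero hq m (h0 ▸ hz)]
    · refine mul_right_cancel₀ hz ?_
      rw [hpm m hm, h0, hqm m hm, h1, h2]

/-- The values of stationary weights at the blocks `ε 0ⁿ ε'` are determined by their values at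
the blocks of zeros. -/
theorem block_eq {a : ℕ → ℝ} (hp : IsStationaryWeight p)
    (h : ∀ n, p (List.replicate n false) = a n) (n : ℕ) :
    p (false :: (List.replicate n false ++ [false])) = a (n + 2) ∧
    p (false :: (List.replicate n false ++ [true])) = a (n + 1) - a (n + 2) ∧
    p (true :: (List.replicate n false ++ [false])) = a (n + 1) - a (n + 2) ∧
    p (true :: (List.replicate n false ++ [true])) = a n - 2 * a (n + 1) + a (n + 2) := by
  have e1 : List.replicate n false ++ [false] = List.replicate (n + 1) false :=
    List.replicate_succ'.symm
  have h00 := h (n + 2)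
  have h01 := hp.sum_append (List.replicate (n + 1) false)
  have h10 := hp.sum_cons (List.replicate (n + 1) false)
  have h1 := hp.sum_cons (List.replicate n false)
  have h11 := hp.sum_append (true :: List.replicate n false)
  rw [List.replicate_succ] at h00
  rw [Fintype.sum_bool] at h01 h10 h1 h11
  rw [← List.replicate_succ'] at h01
  rw [← List.replicate_succ, h, h] at h1
  rw [← List.replicate_succ, h, h] at h10
  rw [h, h] at h01
  rw [List.replicate_succ] at h01
  simp only [List.cons_append, e1] at h01 h11 ⊢
  exact ⟨h00, by linarith, by linarith, by linarith⟩

end IsStationaryWeight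

/-- **Lemma 5.6.** If `1 = a_0 ≥ a_1 ≥ ⋯` and `a_i - 2a_{i+1} + a_{i+2} ≥ 0` for all `i`,
there exists a shift-invariant probability measure `μ` with `μ([0^n]) = a_n` satisfying
the relations of Lemma 5.4 together with `p_{ε w ε'} = p_{ε w} p_{w ε'} / p_w` for `w` not
a block of zeros; these relations determine `μ` uniquely, and `μ` is the unique measure of
maximal entropy among invariant measures `ν` with `ν([0^n]) = a_n` for all `n ≥ 1`. -/
theorem maximal_entropy_measure (a : ℕ → ℝ) (ha0 : a 0 = 1) (hpos : ∀ n, 0 ≤ a n)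
    (hmono : ∀ i : ℕ, a (i + 1) ≤ a i)
    (hconv : ∀ i : ℕ, 0 ≤ a i - 2 * a (i + 1) + a (i + 2)) :
    ∃ μ : Measure (ℕ → Bool),
      (IsProbabilityMeasure μ ∧ MeasurePreserving shift μ μ ∧
        (∀ n : ℕ, 1 ≤ n → (μ (cyl (List.replicate n false))).toReal = a n) ∧
        cylRel a μ ∧ markovRel μ) ∧
      (∀ μ' : Measure (ℕ → Bool), IsProbabilityMeasure μ' → MeasurePreserving shift μ' μ' →
        cylRel a μ' → markovRel μ' → μ' = μ) ∧
      (∀ ν : Measure (ℕ → Bool), IsProbabilityMeasure ν → MeasurePreserving shift ν ν →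
        (∀ n : ℕ, 1 ≤ n → (ν (cyl (List.replicate n false))).toReal = a n) →
        ksEntropy shift ν ≤ ksEntropy shift μ ∧
          (ksEntropy shift ν = ksEntropy shift μ → ν = μ)) := by
  have hw := isStationaryWeight_headWeight ha0 hpos hmono hconv
  have hzero : ∀ n, headWeight a 0 (List.replicate n false) = a n := fun n => by
    simpa [headWeight] using headWeight_replicate (a := a) 0 n []
  obtain ⟨μ, hμ, hcyl⟩ := exists_measure_cyl_eq hw
  have hinv : MeasurePreserving shift μ μ :=
    measurePreserving_shift_iff.2 fun w => by simp only [hcyl, hw.sum_cons]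
  have hblock := headWeight_block ha0 hmono hconv
  have hagree : ∀ p : List Bool → ℝ,
      (∀ n, p (false :: (List.replicate n false ++ [false])) = a (n + 2) ∧
        p (false :: (List.replicate n false ++ [true])) = a (n + 1) - a (n + 2) ∧
        p (true :: (List.replicate n false ++ [false])) = a (n + 1) - a (n + 2) ∧
        p (true :: (List.replicate n false ++ [true])) = a n - 2 * a (n + 1) + a (n + 2)) →
      ∀ n e e', p (e :: (List.replicate n false ++ [e']))
        = headWeight a 0 (e :: (List.replicate n false ++ [e'])) := by
    intro p hp n e e'
    obtain ⟨h00, h01, h10, h11⟩ := hp n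
    obtain ⟨k00, k01, k10, k11⟩ := hblock n
    cases e <;> cases e'
    exacts [h00.trans k00.symm, h01.trans k01.symm, h10.trans k10.symm, h11.trans k11.symm]
  have hunique : ∀ ν : Measure (ℕ → Bool), IsProbabilityMeasure ν →
      MeasurePreserving shift ν ν → cylRel a ν → markovRel ν → ν = μ := by
    intro ν _ hν hrel hmar
    refine measure_ext_of_cyl fun w => ?_
    rw [hcyl]
    exact (isStationaryWeight_cyl hν).eq_of_markov hw (hagree (fun w => ν.real (cyl w)) hrel) hmar
      (fun w hne => headWeight_markov hne) w
  refine ⟨μ, ⟨hμ, hinv, fun n _ => (hcyl _).trans (hzero n), fun n => ?_, fun w hne e e' => ?_⟩,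
    hunique, fun ν _ hν hνa => ?_⟩
  · simp only [← measureReal_def, hcyl]
    exact hblock n
  · simp only [← measureReal_def, hcyl]
    exact headWeight_markov hne e e'
  · have hp := isStationaryWeight_cyl hν
    have hz : ∀ n, ν.real (cyl (List.replicate n false)) = a n := fun n => by
      rcases n.eq_zero_or_pos with rfl | hn
      · exact hp.nil.trans ha0.symm
      · exact hνa n hn
    have hrel : cylRel a ν := hp.block_eq hz
    have hmax := hp.iInf_entropyStep_le hw (fun n => (hz n).trans (hzero n).symm)
      (hagree (fun w => ν.real (cyl w)) hrel) fun w hne => headWeight_markov hne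
    rw [ksEntropy_shift hν, ksEntropy_shift hinv, funext hcyl]
    refine ⟨ENNReal.ofReal_le_ofReal hmax.1, fun heq => hunique ν ‹_› hν hrel ?_⟩
    exact hmax.2 ((ENNReal.ofReal_eq_ofReal_iff (Real.iInf_nonneg hp.entropyStep_nonneg)
      (Real.iInf_nonneg hw.entropyStep_nonneg)).1 heq)
end

section
/- Let (X,T) be a dynamical system on a compact metric space and t ≥ 0. Then the set B^{(t)} = {x ∈ X : there exists μ ∈ V(x) with h_μ ≤ t} has Bowen topological entropy h_top(B^{(t)}) ≤ t. -/
open MeasureTheory Filter Topology Set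
open scoped ENNReal NNReal

/-!  General definitions: Bowen topological entropy (via covers by Bowen balls),
measure-theoretic (Kolmogorov–Sinai) entropy, generic points, saturated systems,
and the specification property. -/

variable {X : Type*}

section BowenCovers

variable [PseudoMetricSpace X] {T : X → X}

lemma bowenH_mono {Z W : Set X} (h : Z ⊆ W) (s ε : ℝ) (n : ℕ) :
    bowenH T Z s ε n ≤ bowenH T W s ε n := by
  unfold bowenH
  refine iInf_mono fun C => iInf_mono fun _ => iInf_mono fun _ => ?_
  exact le_iInf fun hW => iInf_le_of_le (h.trans hW) le_rfl

lemma bowenH_iUnion_le {ι : Type*} [Countable ι] (Z : ι → Set X) (s ε : ℝ) (n : ℕ) :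
    bowenH T (⋃ i, Z i) s ε n ≤ ∑' i, bowenH T (Z i) s ε n := by
  refine ENNReal.le_of_forall_pos_le_add fun δ hδ hfin => ?_
  obtain ⟨δ', hδ', hsum⟩ := ENNReal.exists_pos_sum_of_countable'
    (ε := (δ : ℝ≥0∞)) (by exact_mod_cast hδ.ne') ι
  have hex : ∀ i, ∃ C : Set (X × ℕ), C.Countable ∧ (∀ p ∈ C, n ≤ p.2) ∧
      (Z i ⊆ ⋃ p ∈ C, bowenBall T p.1 p.2 ε) ∧
      ∑' p : C, ENNReal.ofReal (Real.exp (-s * ((p : X × ℕ).2 : ℝ)))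
        ≤ bowenH T (Z i) s ε n + δ' i := by
    intro i
    have hi : bowenH T (Z i) s ε n < bowenH T (Z i) s ε n + δ' i :=
      ENNReal.lt_add_right (ENNReal.ne_top_of_tsum_ne_top hfin.ne i) (hδ' i).ne'
    conv_lhs at hi => unfold bowenH
    simp only [iInf_lt_iff] at hi
    obtain ⟨C, h1, h2, h3, h4⟩ := hi
    exact ⟨C, h1, h2, h3, h4.le⟩
  choose C h1 h2 h3 h4 using hex
  calc bowenH T (⋃ i, Z i) s ε n
      ≤ ∑' p : (⋃ i, C i), ENNReal.ofReal (Real.exp (-s * ((p : X × ℕ).2 : ℝ))) := by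
        refine iInf_le_of_le (⋃ i, C i) (iInf_le_of_le (countable_iUnion h1)
          (iInf_le_of_le ?_ (iInf_le_of_le ?_ le_rfl)))
        · intro p hp
          obtain ⟨i, hi⟩ := mem_iUnion.1 hp
          exact h2 i p hi
        · refine iUnion_subset fun i => (h3 i).trans ?_
          exact biUnion_subset_biUnion_left (subset_iUnion C i)
    _ ≤ ∑' (i) (p : C i), ENNReal.ofReal (Real.exp (-s * ((p : X × ℕ).2 : ℝ))) :=
        ENNReal.tsum_iUnion_le_tsum
          (fun p : X × ℕ => ENNReal.ofReal (Real.exp (-s * (p.2 : ℝ)))) C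
    _ ≤ ∑' i, (bowenH T (Z i) s ε n + δ' i) := ENNReal.tsum_le_tsum h4
    _ = ∑' i, bowenH T (Z i) s ε n + ∑' i, δ' i := ENNReal.tsum_add
    _ ≤ ∑' i, bowenH T (Z i) s ε n + δ := by gcongr

/-- If points of `S` with the same code stay `ε`-close for `n` steps, then `S` is covered by
as many Bowen balls of order `n` as there are codes. -/
lemma bowenH_le_card_code {S : Set X} {F : Type*} [Fintype F] (code : S → F) {s ε : ℝ}
    {n N : ℕ} (hN : N ≤ n)
    (h : ∀ x y : S, code x = code y → (y : X) ∈ bowenBall T x n ε) :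
    bowenH T S s ε N ≤ (Fintype.card F : ℝ≥0∞) * ENNReal.ofReal (Real.exp (-s * n)) := by
  classical
  let g : range code → X × ℕ := fun f => ((f.2.choose : X), n)
  refine iInf_le_of_le (range g) (iInf_le_of_le (countable_range g) (iInf_le_of_le ?_
    (iInf_le_of_le ?_ ?_)))
  · rintro _ ⟨f, rfl⟩
    exact hN
  · intro x hx
    refine mem_biUnion (mem_range_self ⟨code ⟨x, hx⟩, mem_range_self _⟩) ?_
    exact h _ ⟨x, hx⟩ (mem_range_self (f := code) ⟨x, hx⟩).choose_spec
  · calc _ ≤ ∑' f : range code, ENNReal.ofReal (Real.exp (-s * n)) := by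
          refine (ENNReal.tsum_le_tsum_comp_of_surjective
            (f := rangeFactorization g) rangeFactorization_surjective _).trans_eq ?_
          rfl
      _ ≤ ∑' f : F, ENNReal.ofReal (Real.exp (-s * n)) :=
          ENNReal.tsum_comp_le_tsum_of_injective Subtype.val_injective _
      _ = _ := by simp [tsum_fintype]

end BowenCovers

section Counting

lemma sum_range_mul_eq_sum_sum (f : ℕ → ℝ) (k m : ℕ) :
    ∑ i ∈ Finset.range (k * m), f i
      = ∑ j ∈ Finset.range k, ∑ l ∈ Finset.range m, f (j + k * l) := by
  induction m with
  | zero => simp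
  | succ m ih =>
    simp_rw [Finset.sum_range_succ _ m, Finset.sum_add_distrib, ← ih]
    rw [Nat.mul_succ, Finset.sum_range_add]
    simp only [add_comm (k * m)]

lemma exists_offset_sum_le {f : ℕ → ℝ} {k m : ℕ} (hk : 0 < k) {R : ℝ}
    (h : ∑ i ∈ Finset.range (k * m), f i ≤ k * R) :
    ∃ j < k, ∑ l ∈ Finset.range m, f (j + k * l) ≤ R := by
  rw [sum_range_mul_eq_sum_sum] at h
  obtain ⟨j, hj, hle⟩ := Finset.exists_le_of_sum_le (s := Finset.range k) (g := fun _ => R)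
    ⟨0, by simpa using hk⟩ (h.trans_eq (by simp))
  exact ⟨j, by simpa using hj, hle⟩

lemma card_subtype_sum_le {B : Type*} [Fintype B] (L : B → ℝ)
    (hL : ∑ b, Real.exp (-L b) ≤ 1) (m : ℕ) (R : ℝ)
    [Fintype {v : Fin m → B // ∑ l, L (v l) ≤ R}] :
    (Fintype.card {v : Fin m → B // ∑ l, L (v l) ≤ R} : ℝ) ≤ Real.exp R := by
  classical
  have h1 : ∑ v : Fin m → B, Real.exp (-∑ l, L (v l)) ≤ 1 := by
    calc _ = (∑ b, Real.exp (-L b)) ^ m := by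
          rw [Fintype.sum_pow]
          refine Finset.sum_congr rfl fun v _ => ?_
          rw [← Real.exp_sum, Finset.sum_neg_distrib]
      _ ≤ 1 := pow_le_one₀ (Finset.sum_nonneg fun b _ => (Real.exp_pos _).le) hL
  have h2 : (Fintype.card {v : Fin m → B // ∑ l, L (v l) ≤ R} : ℝ) * Real.exp (-R) ≤ 1 := by
    refine le_trans ?_ h1
    rw [Fintype.card_subtype, ← nsmul_eq_mul, ← Finset.sum_const]
    refine (Finset.sum_le_sum (fun v hv => ?_)).trans
      (Finset.sum_le_sum_of_subset_of_nonneg (Finset.filter_subset _ _)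
        fun v _ _ => (Real.exp_pos _).le)
    have := (Finset.mem_filter.1 hv).2
    gcongr
  rw [Real.exp_neg, ← div_eq_mul_inv, div_le_one (Real.exp_pos _)] at h2
  exact h2

end Counting

/-- The points whose itinerary through the balls of radius `r` around the `c i` can be chosen
so that the weights `L` of its first `n` overlapping `k`-blocks sum to at most `R`. -/
def lightItinerary [PseudoMetricSpace X] (T : X → X) {K k : ℕ} (c : Fin K → X) (r : ℝ)
    (L : (Fin k → Fin K) → ℝ) (n : ℕ) (R : ℝ) : Set X :=
  {x | ∃ u : ℕ → Fin K, (∀ i, dist (T^[i] x) (c (u i)) < r) ∧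
    ∑ i ∈ Finset.range n, L (fun q => u (i + q)) ≤ R}

lemma bowenH_lightItinerary_le [PseudoMetricSpace X] {T : X → X} {K k : ℕ} (hk : 0 < k)
    (c : Fin K → X) {ε s h : ℝ} (L : (Fin k → Fin K) → ℝ)
    (hL : ∑ b, Real.exp (-L b) ≤ 1) {n N : ℕ} (hN : N ≤ n) :
    bowenH T (lightItinerary T c (ε / 2) L n (k * (n * h))) s ε N
      ≤ ((k * (K ^ k * K ^ k) : ℕ) : ℝ≥0∞) * ENNReal.ofReal (Real.exp (-(s - h) * n)) := by
  classical
  have hL0 : ∀ b, 0 ≤ L b := by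
    intro b
    have : Real.exp (-L b) ≤ 1 := le_trans
      (Finset.single_le_sum (f := fun b => Real.exp (-L b))
        (fun b _ => (Real.exp_pos _).le) (Finset.mem_univ b)) hL
    simpa using this
  set S := lightItinerary T c (ε / 2) L n (k * (n * h)) with hS
  set m := n / k with hm
  have hkm : k * m ≤ n := Nat.mul_div_le n k
  have hnk : n < k * m + k := by
    have := Nat.div_add_mod n k
    have := Nat.mod_lt n hk
    rw [hm]
    omega
  choose u hu hsum using fun x : S => (show ∃ u : ℕ → Fin K, _ from x.2)
  have hoff : ∀ x : S, ∃ j < k, ∑ l ∈ Finset.range m,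
      L (fun q => u x (j + k * l + q)) ≤ n * h := by
    intro x
    refine exists_offset_sum_le (f := fun i => L (fun q => u x (i + q))) hk
      (le_trans ?_ (hsum x))
    exact Finset.sum_le_sum_of_subset_of_nonneg (by simpa using hkm) fun i _ _ => hL0 _
  choose j hj hjsum using hoff
  let V := {v : Fin m → (Fin k → Fin K) // ∑ l, L (v l) ≤ n * h}
  let code : S → (Fin k × ((Fin k → Fin K) × (Fin k → Fin K))) × V := fun x =>
    ((⟨j x, hj x⟩, (fun q => u x q, fun q => u x (k * m + q))),
      ⟨fun l q => u x (j x + k * l + q), by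
        rw [Fin.sum_univ_eq_sum_range (fun l => L (fun q => u x (j x + k * l + q))) m]
        exact hjsum x⟩)
  have hcode : ∀ x y : S, code x = code y → (y : X) ∈ bowenBall T x n ε := by
    intro x y hxy i hi
    have hjj : j x = j y := by simpa [code] using congrArg (fun z => (z.1.1 : ℕ)) hxy
    have hpre := congrArg (fun z => z.1.2.1) hxy
    have hsuf := congrArg (fun z => z.1.2.2) hxy
    have hv := congrArg (fun z => z.2.1) hxy
    simp only [code] at hpre hsuf hv
    have hui : u x i = u y i := by
      by_cases h1 : i < k
      · simpa using congrFun hpre ⟨i, h1⟩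
      by_cases h2 : k * m ≤ i
      · have := congrFun hsuf ⟨i - k * m, by omega⟩
        simpa [Nat.add_sub_cancel' h2] using this
      have h3 := hj x
      have hl : (i - j x) / k < m := by
        rw [Nat.div_lt_iff_lt_mul hk, mul_comm]
        omega
      have := congrFun (congrFun hv ⟨(i - j x) / k, hl⟩)
        ⟨(i - j x) % k, Nat.mod_lt _ hk⟩
      have hi' : j x + k * ((i - j x) / k) + (i - j x) % k = i := by
        have := Nat.div_add_mod (i - j x) k
        omega
      simp only [← hjj, hi'] at this
      exact this
    have hx := hu x i
    have hy := hu y i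
    rw [← hui, dist_comm] at hy
    have := dist_triangle (T^[i] (x : X)) (c (u x i)) (T^[i] (y : X))
    linarith
  refine (bowenH_le_card_code code hN hcode).trans ?_
  have hV : (Fintype.card V : ℝ≥0∞) ≤ ENNReal.ofReal (Real.exp (n * h)) := by
    rw [← ENNReal.ofReal_natCast]
    exact ENNReal.ofReal_le_ofReal (card_subtype_sum_le L hL m (n * h))
  have hF : Fintype.card ((Fin k × ((Fin k → Fin K) × (Fin k → Fin K))) × V)
      = (k * (K ^ k * K ^ k)) * Fintype.card V := by
    simp [Fintype.card_prod]
  rw [hF, Nat.cast_mul, mul_assoc]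
  gcongr
  calc _ ≤ ENNReal.ofReal (Real.exp (n * h)) * ENNReal.ofReal (Real.exp (-s * n)) := by gcongr
    _ = _ := by
      rw [← ENNReal.ofReal_mul (Real.exp_pos _).le, ← Real.exp_add]
      ring_nf

lemma bowenH_frequently_lightItinerary [PseudoMetricSpace X] {T : X → X} {K k : ℕ}
    (hk : 0 < k) (c : Fin K → X) {ε s h : ℝ} (hs : h < s) (L : (Fin k → Fin K) → ℝ)
    (hL : ∑ b, Real.exp (-L b) ≤ 1) (N : ℕ) :
    bowenH T {x | ∃ᶠ n : ℕ in atTop, x ∈ lightItinerary T c (ε / 2) L n (k * (n * h))} s ε N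
      = 0 := by
  set D : ℝ≥0∞ := ((k * (K ^ k * K ^ k) : ℕ) : ℝ≥0∞) with hD
  set a : ℕ → ℝ≥0∞ := fun n => D * ENNReal.ofReal (Real.exp (-(s - h) * n)) with ha
  have hsum : ∑' n, a n ≠ ∞ := by
    have hpow : ∀ n : ℕ, ENNReal.ofReal (Real.exp (-(s - h) * n))
        = ENNReal.ofReal (Real.exp (-(s - h))) ^ n := by
      intro n
      rw [← ENNReal.ofReal_pow (Real.exp_pos _).le, ← Real.exp_nat_mul, mul_comm]
    simp only [ha, hpow]
    rw [ENNReal.tsum_mul_left, ENNReal.tsum_geometric]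
    refine ENNReal.mul_ne_top (ENNReal.natCast_ne_top _) (ENNReal.inv_ne_top.2 ?_)
    refine (tsub_pos_of_lt ?_).ne'
    rw [ENNReal.ofReal_lt_one, Real.exp_lt_one_iff]
    linarith
  refine le_antisymm ?_ zero_le
  refine ge_of_tendsto (ENNReal.tendsto_sum_nat_add a hsum) ?_
  filter_upwards [eventually_ge_atTop N] with M hM
  calc _ ≤ bowenH T (⋃ n : ℕ,
        lightItinerary T c (ε / 2) L (n + M) (k * (((n + M : ℕ) : ℝ) * h))) s ε N := by
        refine bowenH_mono (fun x hx => ?_) _ _ _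
        obtain ⟨n, hn, hxn⟩ := (frequently_atTop.1 hx) M
        refine mem_iUnion.2 ⟨n - M, ?_⟩
        rwa [Nat.sub_add_cancel hn]
    _ ≤ ∑' n : ℕ, a (n + M) := by
        refine (bowenH_iUnion_le _ _ _ _).trans (ENNReal.tsum_le_tsum fun n => ?_)
        exact bowenH_lightItinerary_le hk c L hL (by omega)

lemma exists_rat_weights {B : Type*} [Fintype B] {p : B → ℝ} (hp : ∀ b, 0 ≤ p b)
    (hp1 : ∑ b, p b = 1) {R : ℝ} (hR : ∑ b, Real.negMulLog (p b) < R) :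
    ∃ L : B → ℚ, ∑ b, Real.exp (-(L b : ℝ)) ≤ 1 ∧ ∑ b, p b * (L b : ℝ) < R := by
  set d := R - ∑ b, Real.negMulLog (p b) with hd
  have hd0 : 0 < d := by linarith
  set M : ℝ := (Fintype.card B : ℝ) with hM
  have hM0 : 0 ≤ M := Nat.cast_nonneg _
  set η : ℝ := d / (4 * (M + 1)) with hη
  have hη0 : 0 < η := by positivity
  have hMη : M * η ≤ d / 4 := by
    rw [hη, mul_div_assoc', div_le_div_iff₀ (by positivity) (by norm_num)]
    nlinarith
  have hden : 0 < 1 + M * η := by positivity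
  have hlog : Real.log (1 + M * η) ≤ d / 4 := by
    linarith [Real.log_le_sub_one_of_pos hden]
  have hex : ∀ b, ∃ l : ℚ, -Real.log ((p b + η) / (1 + M * η)) < l ∧
      (l : ℝ) < -Real.log ((p b + η) / (1 + M * η)) + d / 2 :=
    fun b => exists_rat_btwn (by linarith)
  choose L hL1 hL2 using hex
  refine ⟨L, ?_, ?_⟩
  · calc _ ≤ ∑ b, (p b + η) / (1 + M * η) := by
          refine Finset.sum_le_sum fun b _ => ?_
          have hb : 0 < (p b + η) / (1 + M * η) := div_pos (by linarith [hp b]) hden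
          calc _ ≤ Real.exp (Real.log ((p b + η) / (1 + M * η))) :=
                Real.exp_le_exp.2 (by linarith [hL1 b])
            _ = _ := Real.exp_log hb
      _ = 1 := by
          rw [← Finset.sum_div, Finset.sum_add_distrib, hp1]
          simp [← hM, hden.ne']
  · have hb : ∀ b, p b * (L b : ℝ) ≤ Real.negMulLog (p b) + p b * (3 * d / 4) := by
      intro b
      rcases (hp b).eq_or_lt with h0 | h0
      · simp [← h0]
      have h1 : -Real.log ((p b + η) / (1 + M * η)) ≤ d / 4 - Real.log (p b) := by
        rw [Real.log_div (by linarith) hden.ne']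
        linarith [Real.log_le_log h0 (by linarith : p b ≤ p b + η)]
      have h2 : (L b : ℝ) ≤ -Real.log (p b) + 3 * d / 4 := by linarith [hL2 b]
      calc _ ≤ p b * (-Real.log (p b) + 3 * d / 4) := by gcongr
        _ = _ := by rw [Real.negMulLog]; ring
    calc _ ≤ ∑ b, (Real.negMulLog (p b) + p b * (3 * d / 4)) :=
          Finset.sum_le_sum fun b _ => hb b
      _ = ∑ b, Real.negMulLog (p b) + 3 * d / 4 := by
          rw [Finset.sum_add_distrib, ← Finset.sum_mul, hp1, one_mul]
      _ < R := by linarith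

/-- Portmanteau theorem for the empirical measures along an orbit. -/
lemma tendsto_frequency_of_null_frontier [TopologicalSpace X] [CompactSpace X]
    [MeasurableSpace X] [BorelSpace X] [HasOuterApproxClosed X] {T : X → X} {x : X}
    {μ : Measure X} [IsProbabilityMeasure μ] {φ : ℕ → ℕ} (hφ : StrictMono φ)
    (hlim : ∀ f : C(X, ℝ),
      Tendsto (fun m : ℕ => (∑ j ∈ Finset.range (φ m), f (T^[j] x)) / (φ m : ℝ))
        atTop (𝓝 (∫ y, f y ∂μ)))
    {E : Set X} (hE : MeasurableSet E) (hfr : μ (frontier E) = 0) :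
    Tendsto (fun m : ℕ =>
      (∑ j ∈ Finset.range (φ m), E.indicator (fun _ => (1 : ℝ)) (T^[j] x)) / (φ m : ℝ))
        atTop (𝓝 (μ.real E)) := by
  rw [← tendsto_add_atTop_iff_nat 1]
  let e : ℕ → Measure X := fun m => ((φ (m + 1) : ℕ) : ℝ≥0∞)⁻¹ •
    ∑ j ∈ Finset.range (φ (m + 1)), Measure.dirac (T^[j] x)
  have hpos : ∀ m, φ (m + 1) ≠ 0 := fun m => by
    have := hφ.id_le (m + 1)
    simp only [id] at this
    omega
  have he : ∀ m, IsProbabilityMeasure (e m) := fun m => ⟨by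
    simp only [e, Measure.smul_apply, Measure.finsetSum_apply, measure_univ, Finset.sum_const,
      Finset.card_range, smul_eq_mul, nsmul_eq_mul, mul_one]
    exact ENNReal.inv_mul_cancel (by exact_mod_cast hpos m) (ENNReal.natCast_ne_top _)⟩
  let ν : ℕ → ProbabilityMeasure X := fun m => ⟨e m, he m⟩
  let ν₀ : ProbabilityMeasure X := ⟨μ, inferInstance⟩
  have hν : Tendsto ν atTop (𝓝 ν₀) := by
    rw [ProbabilityMeasure.tendsto_iff_forall_integral_tendsto]
    intro f
    have hf := (tendsto_add_atTop_iff_nat 1).2 (hlim f.toContinuousMap)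
    refine hf.congr fun m => ?_
    change _ = ∫ y, f y ∂(e m)
    rw [integral_smul_measure, integral_finsetSum_measure]
    · simp only [ENNReal.toReal_inv, ENNReal.toReal_natCast, smul_eq_mul]
      rw [div_eq_inv_mul]
      congr 1
      refine Finset.sum_congr rfl fun j _ => ?_
      rw [integral_dirac' _ _ f.continuous.stronglyMeasurable]
      rfl
    · exact fun j _ => f.integrable _
  have h := ProbabilityMeasure.tendsto_measure_of_null_frontier_of_tendsto' hν (E := E) hfr
  have h' := (ENNReal.tendsto_toReal (measure_ne_top μ E)).comp h
  refine h'.congr fun m => ?_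
  change (e m E).toReal = _
  simp only [e, Measure.smul_apply, Measure.finsetSum_apply, smul_eq_mul,
    Measure.dirac_apply' _ hE, ENNReal.toReal_mul, ENNReal.toReal_inv,
    ENNReal.toReal_natCast]
  rw [div_eq_inv_mul, ENNReal.toReal_sum fun j _ => by
    by_cases hj : T^[j] x ∈ E <;> simp [hj]]
  congr 1
  refine Finset.sum_congr rfl fun j _ => ?_
  by_cases hj : T^[j] x ∈ E <;> simp [hj]

/-- A finite partition subordinate to a cover by balls such that almost every orbit avoids the
boundary of the partition. -/
lemma exists_partition_ae_orbit_locally_constant [PseudoMetricSpace X] [MeasurableSpace X]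
    [BorelSpace X] {T : X → X} (hT : Continuous T) (μ : Measure X) [SFinite μ] {K : ℕ}
    {c : Fin K → X} {r₀ r₁ : ℝ} (hr : r₀ < r₁) (hc : ∀ y, ∃ i, dist y (c i) < r₀) :
    ∃ P : X → Fin K, Measurable P ∧ (∀ y, dist y (c (P y)) < r₁) ∧
      ∀ᵐ y ∂μ, ∀ j : ℕ, ∀ᶠ z in 𝓝 (T^[j] y), P z = P (T^[j] y) := by
  classical
  let sphere : Fin K × ℕ → ℝ → Set X := fun a r => {y | dist (T^[a.2] y) (c a.1) = r}
  have hcount : (⋃ a, {r | 0 < μ (sphere a r)}).Countable := by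
    refine countable_iUnion fun a => Measure.countable_meas_pos_of_disjoint_iUnion ?_ ?_
    · intro r
      exact (isClosed_eq ((hT.iterate a.2).dist continuous_const) continuous_const).measurableSet
    · intro r r' hrr
      refine Set.disjoint_left.2 fun y hy hy' => hrr ?_
      exact hy.symm.trans hy'
  obtain ⟨r, hrS, hr1, hr2⟩ := (hcount.dense_compl ℝ).exists_between hr
  have hnull : ∀ a, μ (sphere a r) = 0 := by
    intro a
    by_contra h
    exact hrS (mem_iUnion.2 ⟨a, pos_iff_ne_zero.2 h⟩)
  have hex : ∀ y, ∃ n : ℕ, ∃ h : n < K, dist y (c ⟨n, h⟩) < r := fun y => by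
    obtain ⟨i, hi⟩ := hc y
    exact ⟨i, i.2, hi.trans hr1⟩
  let P : X → Fin K := fun y => ⟨Nat.find (hex y), (Nat.find_spec (hex y)).1⟩
  refine ⟨P, ?_, ?_, ?_⟩
  · have : Measurable fun y => Nat.find (hex y) := by
      refine measurable_find hex fun n => ?_
      by_cases h : n < K
      · simpa [h] using (isOpen_lt (continuous_id.dist continuous_const)
          continuous_const : IsOpen {y | dist y (c ⟨n, h⟩) < r}).measurableSet
      · simp [h]
    exact measurable_to_countable' fun i => by
      have h := this (measurableSet_singleton (i : ℕ))
      convert h using 1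
      ext y
      simp [P, Fin.ext_iff]
  · exact fun y => (Nat.find_spec (hex y)).2.trans hr2
  · have hae : ∀ᵐ y ∂μ, ∀ a, y ∉ sphere a r :=
      ae_all_iff.2 fun a => measure_eq_zero_iff_ae_notMem.1 (hnull a)
    filter_upwards [hae] with y hy j
    have hloc : ∀ i, ∀ᶠ z in 𝓝 (T^[j] y),
        (dist z (c i) < r ↔ dist (T^[j] y) (c i) < r) := by
      intro i
      have hcont : Tendsto (fun z => dist z (c i)) (𝓝 (T^[j] y)) (𝓝 (dist (T^[j] y) (c i))) :=
        (continuous_id.dist continuous_const).tendsto _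
      rcases lt_or_gt_of_ne (show dist (T^[j] y) (c i) ≠ r from hy (i, j)) with h | h
      · filter_upwards [hcont.eventually_lt_const h] with z hz
        simp [hz, h]
      · filter_upwards [hcont.eventually_const_lt h] with z hz
        exact iff_of_false hz.not_gt h.not_gt
    filter_upwards [eventually_all.2 hloc] with z hz
    exact Fin.ext (le_antisymm
      (Nat.find_mono fun n ⟨h, hn⟩ => ⟨h, (hz ⟨n, h⟩).2 hn⟩)
      (Nat.find_mono fun n ⟨h, hn⟩ => ⟨h, (hz ⟨n, h⟩).1 hn⟩))

lemma frontier_subset_not_eventually {k K : ℕ} [TopologicalSpace X] {T : X → X}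
    (hT : Continuous T) (P : X → Fin K) (b : Fin k → Fin K) :
    frontier {y | ∀ q : Fin k, P (T^[q] y) = b q} ⊆
      {y | ¬ ∀ j : ℕ, ∀ᶠ z in 𝓝 (T^[j] y), P z = P (T^[j] y)} := by
  intro y hy hgood
  have hev : ∀ᶠ z in 𝓝 y, ∀ q : Fin k, P (T^[q] z) = P (T^[q] y) :=
    eventually_all.2 fun q => (hT.iterate q).continuousAt.eventually (hgood q)
  by_cases hyE : ∀ q : Fin k, P (T^[q] y) = b q
  · refine hy.2 (mem_interior_iff_mem_nhds.2 ?_)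
    filter_upwards [hev] with z hz q
    rw [hz, hyE]
  · refine (mem_closure_iff_frequently.1 hy.1) ?_
    filter_upwards [hev] with z hz hzE
    exact hyE fun q => (hz q).symm.trans (hzE q)

lemma sum_negMulLog_cylinder_le_partInfo {k K : ℕ} [MeasurableSpace X] (T : X → X)
    (μ : Measure X) (P : X → Fin K) :
    ∑ b : Fin k → Fin K, ENNReal.ofReal (Real.negMulLog
      (μ.real {y | ∀ q : Fin k, P (T^[q] y) = b q}))
      ≤ partInfo T μ (fun y => (P y : ℕ)) k := by
  have hinj : Function.Injective fun b : Fin k → Fin K => List.ofFn fun q => (b q : ℕ) := by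
    intro b b' h
    funext q
    exact Fin.ext (congrFun (List.ofFn_injective h) q)
  rw [← tsum_fintype (L := SummationFilter.unconditional _)]
  refine le_trans (le_of_eq ?_) (ENNReal.tsum_comp_le_tsum_of_injective hinj _)
  refine tsum_congr fun b => ?_
  congr 4
  ext y
  have : (List.range k).map (fun j => (P (T^[j] y) : ℕ))
      = List.ofFn fun q : Fin k => (P (T^[q] y) : ℕ) := by
    rw [← List.map_coe_finRange_eq_range, List.map_map, List.ofFn_eq_map]
    rfl
  simp only [mem_singleton_iff, this, List.ofFn_inj, funext_iff,
    Fin.ext_iff]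

/-- A point having a limit measure of small entropy infinitely often has a light
itinerary, for a suitable weight with rational values. -/
lemma exists_frequently_mem_lightItinerary [MetricSpace X] [CompactSpace X]
    [MeasurableSpace X] [BorelSpace X] {T : X → X} (hT : Continuous T) {x : X}
    {μ : Measure X} [IsProbabilityMeasure μ] (hμ : IsLimitMeasure T x μ) {h : ℝ}
    (hent : ksEntropy T μ < ENNReal.ofReal h) {K : ℕ} {c : Fin K → X} {r₀ r₁ : ℝ}
    (hr : r₀ < r₁) (hc : ∀ y, ∃ i, dist y (c i) < r₀) :
    ∃ (k : ℕ) (L : (Fin k → Fin K) → ℚ), 0 < k ∧ ∑ b, Real.exp (-(L b : ℝ)) ≤ 1 ∧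
      ∃ᶠ n : ℕ in atTop,
        x ∈ lightItinerary T c r₁ (fun b => (L b : ℝ)) n (k * (n * h)) := by
  obtain ⟨φ, hφ, hlim⟩ := hμ
  obtain ⟨P, hPm, hPc, hPae⟩ :=
    exists_partition_ae_orbit_locally_constant hT μ hr hc
  have hfin : (range fun y => (P y : ℕ)).Finite :=
    (finite_range (fun i : Fin K => (i : ℕ))).subset (range_comp_subset_range P _)
  have hlt : atTop.liminf (fun n : ℕ => partInfo T μ (fun y => (P y : ℕ)) n / (n : ℝ≥0∞))
      < ENNReal.ofReal h := by
    refine lt_of_le_of_lt ?_ hent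
    refine le_iSup_of_le (fun y => (P y : ℕ)) (le_iSup_of_le ?_ (le_iSup_of_le hfin le_rfl))
    exact measurable_from_top.comp hPm
  obtain ⟨k, hkinfo, hk⟩ :=
    ((frequently_lt_of_liminf_lt (by isBoundedDefault) hlt).and_eventually
      (eventually_gt_atTop 0)).exists
  let E : (Fin k → Fin K) → Set X := fun b => {y | ∀ q : Fin k, P (T^[q] y) = b q}
  have hEm : ∀ b, MeasurableSet (E b) := by
    intro b
    have : E b = ⋂ q : Fin k, (fun y => P (T^[q] y)) ⁻¹' {b q} := by
      ext y; simp [E]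
    rw [this]
    exact MeasurableSet.iInter fun q =>
      (hPm.comp (hT.iterate q).measurable) (measurableSet_singleton _)
  have hEfr : ∀ b, μ (frontier (E b)) = 0 := fun b =>
    measure_mono_null (frontier_subset_not_eventually hT P b) hPae
  have hE1 : ∑ b, μ.real (E b) = 1 := by
    rw [← measureReal_biUnion_finset (fun b _ b' _ hbb => ?_) (fun b _ => hEm b)]
    · have : (⋃ b ∈ Finset.univ, E b) = univ := by
        ext y
        simp only [Finset.mem_univ, iUnion_true, mem_iUnion, mem_univ, iff_true]
        exact ⟨fun q => P (T^[q] y), fun q => rfl⟩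
      rw [this]
      simp
    · refine Set.disjoint_left.2 fun y hy hy' => hbb ?_
      funext q
      exact (hy q).symm.trans (hy' q)
  have hH : ∑ b, Real.negMulLog (μ.real (E b)) < k * h := by
    have h0 : ∀ b ∈ (Finset.univ : Finset (Fin k → Fin K)), 0 ≤ Real.negMulLog (μ.real (E b)) :=
      fun b _ => Real.negMulLog_nonneg measureReal_nonneg measureReal_le_one
    have h1 : ENNReal.ofReal (∑ b, Real.negMulLog (μ.real (E b)))
        < ENNReal.ofReal (k * h) := by
      rw [ENNReal.ofReal_sum_of_nonneg h0]
      refine (sum_negMulLog_cylinder_le_partInfo T μ P).trans_lt ?_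
      rw [ENNReal.div_lt_iff (Or.inl (by exact_mod_cast hk.ne'))
        (Or.inl (ENNReal.natCast_ne_top k))] at hkinfo
      rwa [ENNReal.ofReal_mul (Nat.cast_nonneg k), ENNReal.ofReal_natCast, mul_comm]
    exact lt_of_not_ge fun h2 => h1.not_ge (ENNReal.ofReal_le_ofReal h2)
  obtain ⟨L, hL1, hL2⟩ := exists_rat_weights (fun b => measureReal_nonneg) hE1 hH
  refine ⟨k, L, hk, hL1, ?_⟩
  have hsum : ∀ n : ℕ, ∑ i ∈ Finset.range n, (L (fun q => P (T^[i + q] x)) : ℝ)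
      = ∑ b, (∑ i ∈ Finset.range n, (E b).indicator (fun _ => (1 : ℝ)) (T^[i] x)) * L b := by
    intro n
    simp_rw [Finset.sum_mul]
    rw [Finset.sum_comm]
    refine Finset.sum_congr rfl fun i _ => ?_
    have hmem : ∀ b, T^[i] x ∈ E b ↔ (fun q : Fin k => P (T^[i + q] x)) = b := by
      intro b
      simp only [E, mem_ofPred_eq, ← Function.iterate_add_apply, funext_iff, add_comm i]
    rw [Finset.sum_eq_single (fun q : Fin k => P (T^[i + q] x))]
    · rw [indicator_of_mem ((hmem _).2 rfl), one_mul]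
    · intro b _ hb
      rw [indicator_of_notMem fun hb' => hb ((hmem b).1 hb').symm, zero_mul]
    · simp
  have htend : Tendsto (fun m : ℕ =>
      (∑ i ∈ Finset.range (φ m), (L (fun q => P (T^[i + q] x)) : ℝ)) / (φ m : ℝ))
      atTop (𝓝 (∑ b, μ.real (E b) * L b)) := by
    have := tendsto_finsetSum (Finset.univ : Finset (Fin k → Fin K)) fun b _ =>
      (tendsto_frequency_of_null_frontier hφ hlim (hEm b) (hEfr b)).mul_const (L b : ℝ)
    refine this.congr fun m => ?_
    rw [hsum, Finset.sum_div]
    refine Finset.sum_congr rfl fun b _ => ?_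
    ring
  have hev : ∀ᶠ m in atTop,
      x ∈ lightItinerary T c r₁ (fun b => (L b : ℝ)) (φ m) (k * (φ m * h)) := by
    filter_upwards [htend.eventually_lt_const hL2, hφ.tendsto_atTop.eventually_gt_atTop 0]
      with m hm hpos
    refine ⟨fun i => P (T^[i] x), fun i => hPc _, ?_⟩
    rw [div_lt_iff₀ (by exact_mod_cast hpos)] at hm
    linarith
  exact hφ.tendsto_atTop.frequently hev.frequently

lemma bowenEntropyRes_le [PseudoMetricSpace X] {T : X → X} {Z : Set X} {ε t : ℝ}
    (ht : 0 ≤ t) (h : ∀ s, t < s → ∀ N, bowenH T Z s ε N = 0) :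
    bowenEntropyRes T Z ε ≤ ENNReal.ofReal t := by
  refine le_of_forall_gt_imp_ge_of_dense fun a ha => ?_
  rcases eq_or_ne a ∞ with rfl | hatop
  · exact le_top
  lift a to ℝ≥0 using hatop
  refine sInf_le ⟨a, ?_, rfl⟩
  have hta : t < a := (Real.toNNReal_lt_iff_lt_coe ht).1 (ENNReal.coe_lt_coe.1 ha)
  simp [h a hta]

/-- **Lemma 2.1 (Bowen).** For `t ≥ 0`, the set
`B^{(t)} = {x : ∃ μ ∈ V(x), h_μ ≤ t}` has Bowen topological entropy at most `t`. -/
theorem bowen_lemma {X : Type*} [MetricSpace X] [CompactSpace X]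
    [MeasurableSpace X] [BorelSpace X] (T : X → X) (hT : Continuous T)
    (t : ℝ) (ht : 0 ≤ t) :
    bowenEntropy T {x : X | ∃ μ : Measure X, IsProbabilityMeasure μ ∧
        IsLimitMeasure T x μ ∧ ksEntropy T μ ≤ ENNReal.ofReal t} ≤
      ENNReal.ofReal t := by
  refine iSup₂_le fun ε hε => bowenEntropyRes_le ht fun s hs N => ?_
  obtain ⟨C, -, hC, hcover⟩ :=
    finite_cover_balls_of_compact (isCompact_univ (X := X)) (e := ε / 4) (by linarith)
  obtain ⟨K, c, hc⟩ := hC.fin_param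
  have hc' : ∀ y, ∃ i, dist y (c i) < ε / 4 := by
    intro y
    obtain ⟨z, hz, hyz⟩ := mem_iUnion₂.1 (hcover (mem_univ y))
    rw [← hc.2] at hz
    obtain ⟨i, rfl⟩ := hz
    exact ⟨i, hyz⟩
  obtain ⟨h, hth, hhs⟩ := exists_between hs
  let ι := {w : Σ k : ℕ, (Fin k → Fin K) → ℚ //
    0 < w.1 ∧ ∑ b, Real.exp (-(w.2 b : ℝ)) ≤ 1}
  refine le_antisymm ?_ zero_le
  calc _ ≤ bowenH T (⋃ w : ι, {x | ∃ᶠ n : ℕ in atTop, x ∈ lightItinerary T c (ε / 2)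
        (fun b => (w.1.2 b : ℝ)) n (w.1.1 * (n * h))}) s ε N := by
        refine bowenH_mono ?_ _ _ _
        rintro x ⟨μ, hμ, hlim, hent⟩
        obtain ⟨k, L, hk, hL, hx⟩ := exists_frequently_mem_lightItinerary hT hlim
          (hent.trans_lt ((ENNReal.ofReal_lt_ofReal_iff (ht.trans_lt hth)).2 hth))
          (by linarith : ε / 4 < ε / 2) hc'
        exact mem_iUnion.2 ⟨⟨⟨k, L⟩, hk, hL⟩, hx⟩
    _ ≤ ∑' w : ι, bowenH T {x | ∃ᶠ n : ℕ in atTop, x ∈ lightItinerary T c (ε / 2)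
        (fun b => (w.1.2 b : ℝ)) n (w.1.1 * (n * h))} s ε N := bowenH_iUnion_le _ _ _ _
    _ = 0 := by
        rw [ENNReal.tsum_eq_zero]
        exact fun w => bowenH_frequently_lightItinerary w.2.1 c hhs _ w.2.2 N
end
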